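/- arXiv:1005.0038 — 6 statements merged into one kernel-verified Lean document; each statement's English description precedes it below -/
import Mathlib

section
/- Suppose a family (λ_k)_{k∈-ℕ} of Borel probability measures on S satisfies the convolution equation λ_k = μ_k * λ_{k-1} for every k ∈ -ℕ. Then there exists a solution {X,N} of Tsirelson's equation with noise law μ, unique up to identity in law, such that for each k ∈ -ℕ, X_k has law λ_k. -/
open MeasureTheory ProbabilityTheory Filter Topology
open scoped NNReal ENNReal

universe u v w w₂

noncomputable section

/-- The sub-σ-field generated by the process `Y` from index `k` on; since index `j : ℕ`
stands for time `-j`, this is the σ-field of the past `σ(Y_j : j ≤ -k)`. -/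
def past {Ω α : Type*} [MeasurableSpace α] (Y : ℕ → Ω → α) (k : ℕ) : MeasurableSpace Ω :=
  ⨆ j ≥ k, MeasurableSpace.comap (Y j) inferInstance

/-- A solution of Tsirelson's equation with noise law `μ`.  The index `k : ℕ` stands for the
time `-k ∈ -ℕ`, so that time `k - 1` corresponds to index `k + 1`. -/
structure IsSolution {Ω S G : Type*} [MeasurableSpace Ω] [MeasurableSpace S] [MeasurableSpace G]
    [SMul G S] (P : Measure Ω) (μ : ℕ → Measure G)
    (X : ℕ → Ω → S) (N : ℕ → Ω → G) : Prop where
  measurable_X : ∀ k, Measurable (X k)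
  measurable_N : ∀ k, Measurable (N k)
  eqn : ∀ k, X k =ᵐ[P] fun ω => N k ω • X (k + 1) ω
  indep : ∀ k, Indep (MeasurableSpace.comap (N k) inferInstance)
      (past X (k + 1) ⊔ past N (k + 1)) P
  law_N : ∀ k, P.map (N k) = μ k

/-- The joint law of `(X, N)` on the path space `S^{-ℕ} × Σ^{-ℕ}`. -/
def jointLaw {Ω S G : Type*} [MeasurableSpace Ω] [MeasurableSpace S] [MeasurableSpace G]
    (P : Measure Ω) (X : ℕ → Ω → S) (N : ℕ → Ω → G) : Measure ((ℕ → S) × (ℕ → G)) :=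
  P.map fun ω => (fun k => X k ω, fun k => N k ω)

/-- A solution is strong if each `X k` is a.s. equal to a `past N k`-measurable function,
i.e. `X k` is measurable for the `P`-completion of `σ(N_j : j ≤ -k)`. -/
def IsStrong {Ω S G : Type*} [MeasurableSpace Ω] [MeasurableSpace S] [MeasurableSpace G]
    (P : Measure Ω) (X : ℕ → Ω → S) (N : ℕ → Ω → G) : Prop :=
  ∀ k, ∃ Y : Ω → S, Measurable[past N k] Y ∧ X k =ᵐ[P] Y

/-- Triviality of the tail σ-field `⨅ k, m k`. -/
def TailTrivial {Ω : Type*} [MeasurableSpace Ω] (P : Measure Ω)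
    (m : ℕ → MeasurableSpace Ω) : Prop :=
  ∀ A : Set Ω, MeasurableSet[⨅ k, m k] A → P A = 0 ∨ P A = 1

/-- Convolution `μ * ν` of a measure on the acting semigroup with a measure on the space:
the pushforward of `μ ⊗ ν` under the action map. -/
def conv {G S : Type*} [MeasurableSpace G] [MeasurableSpace S] [SMul G S]
    (μ : Measure G) (ν : Measure S) : Measure S :=
  (μ.prod ν).map fun p => p.1 • p.2

/-- Convolution of two measures on the semigroup. -/
def convG {G : Type*} [MeasurableSpace G] [Mul G] (μ ν : Measure G) : Measure G :=
  (μ.prod ν).map fun p => p.1 * p.2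

/-- `prodN N n j = N_n · N_{n+1} · ⋯ · N_{n+j}`; in the time-indexing of the paper (index `m`
is time `-m`) this is `N_{k,l}` with `k = -n` and `l = -(n+j)-1 → -∞` as `j → ∞`. -/
def prodN {Ω G : Type*} [Mul G] (N : ℕ → Ω → G) (n : ℕ) : ℕ → Ω → G
  | 0 => N n
  | j + 1 => fun ω => prodN N n j ω * N (n + j + 1) ω

/-- `convIter μ n j = μ_n * μ_{n+1} * ⋯ * μ_{n+j}`, the law analogue of `prodN`. -/
def convIter {G : Type*} [MeasurableSpace G] [Mul G] (μ : ℕ → Measure G) (n : ℕ) :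
    ℕ → Measure G
  | 0 => μ n
  | j + 1 => convG (convIter μ n j) (μ (n + j + 1))

/-- `sigPow G n` is `Σ^{n+1}`, the set of products of `n+1` elements of `Σ = G`. -/
def sigPow (G : Type*) [Mul G] : ℕ → Set G
  | 0 => Set.univ
  | n + 1 => Set.image2 (· * ·) (sigPow G n) Set.univ

/-- Two sub-σ-fields are equal up to `P`-null sets. -/
def EqModNull {Ω : Type*} [MeasurableSpace Ω] (P : Measure Ω)
    (m₁ m₂ : MeasurableSpace Ω) : Prop :=
  (∀ A, MeasurableSet[m₁] A → ∃ B, MeasurableSet[m₂] B ∧ P (symmDiff A B) = 0) ∧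
  (∀ B, MeasurableSet[m₂] B → ∃ A, MeasurableSet[m₁] A ∧ P (symmDiff A B) = 0)

end

namespace TsirelsonAux

variable {S : Type u} {G : Type v}

/-- Truncation of a path at index `m`. -/
def trunc (m : ℕ) (e : (ℕ → S) × (ℕ → G)) : (ℕ → S) × (ℕ → G) :=
  (fun k => e.1 (min k m), fun k => e.2 (min k m))

/-- The one-step extension map. -/
def ext [SMul G S] (k : ℕ) (p : G × ((ℕ → S) × (ℕ → G))) : (ℕ → S) × (ℕ → G) :=
  (Function.update p.2.1 k (p.1 • p.2.1 (k + 1)), Function.update p.2.2 k p.1)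

/-- Path rebuilt from `X (k + d)` and the noise. -/
def rebuild [SMul G S] {Ω : Type*} (g0 : G) (X : ℕ → Ω → S) (N : ℕ → Ω → G) :
    ℕ → ℕ → Ω → (ℕ → S) × (ℕ → G)
  | 0, k => fun ω => (fun _ => X k ω, fun _ => g0)
  | d + 1, k => fun ω => ext k (N k ω, rebuild g0 X N d (k + 1) ω)

/-- Law of `rebuild`. -/
noncomputable def lawR [SMul G S] [MeasurableSpace S] [MeasurableSpace G] (g0 : G)
    (μ : ℕ → Measure G) (lam : ℕ → Measure S) :
    ℕ → ℕ → Measure ((ℕ → S) × (ℕ → G))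
  | 0, k => (lam k).map (fun x => (fun _ => x, fun _ => g0))
  | d + 1, k => ((μ k).prod (lawR g0 μ lam d (k + 1))).map (ext k)

/-- Partial solution: the equation is only required down to index `n`. -/
structure PS {Ω : Type*} [MeasurableSpace Ω] [MeasurableSpace S] [MeasurableSpace G]
    [SMul G S] (n : ℕ) (P : Measure Ω) (μ : ℕ → Measure G) (lam : ℕ → Measure S)
    (X : ℕ → Ω → S) (N : ℕ → Ω → G) : Prop where
  measurable_X : ∀ k, Measurable (X k)
  measurable_N : ∀ k, Measurable (N k)
  eqn : ∀ k < n, X k =ᵐ[P] fun ω => N k ω • X (k + 1) ω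
  indep : ∀ k, Indep (MeasurableSpace.comap (N k) inferInstance)
      (past X (k + 1) ⊔ past N (k + 1)) P
  law_N : ∀ k, P.map (N k) = μ k
  law_X : P.map (X n) = lam n

theorem past_anti {Ω α : Type*} [MeasurableSpace α] (Y : ℕ → Ω → α) {k l : ℕ} (h : k ≤ l) :
    past Y l ≤ past Y k :=
  iSup₂_le fun j hj => le_iSup₂_of_le (f := fun j (_ : j ≥ k) =>
    MeasurableSpace.comap (Y j) inferInstance) j (le_trans h hj) le_rfl

theorem meas_past {Ω α : Type*} [MeasurableSpace α] (Y : ℕ → Ω → α) {k j : ℕ} (h : k ≤ j) :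
    Measurable[past Y k] (Y j) := by
  rw [measurable_iff_comap_le]
  exact le_iSup₂_of_le (f := fun j (_ : j ≥ k) =>
    MeasurableSpace.comap (Y j) inferInstance) j h le_rfl

theorem meas_path [MeasurableSpace S] [MeasurableSpace G] {Ω : Type*} (m : MeasurableSpace Ω)
    {f : Ω → (ℕ → S) × (ℕ → G)}
    (h1 : ∀ j, Measurable fun ω => (f ω).1 j) (h2 : ∀ j, Measurable fun ω => (f ω).2 j) :
    Measurable f :=
  Measurable.prodMk (measurable_pi_iff.2 h1) (measurable_pi_iff.2 h2)

section
set_option linter.unusedSectionVars false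
variable [TopologicalSpace S] [CompactSpace S] [TopologicalSpace.MetrizableSpace S]
  [SecondCountableTopology S] [MeasurableSpace S] [BorelSpace S]
  [TopologicalSpace G] [CompactSpace G] [TopologicalSpace.MetrizableSpace G]
  [SecondCountableTopology G] [MeasurableSpace G] [BorelSpace G]

theorem continuous_trunc (m : ℕ) : Continuous (trunc (S := S) (G := G) m) := by
  unfold trunc; fun_prop

theorem measurable_trunc (m : ℕ) : Measurable (trunc (S := S) (G := G) m) :=
  (continuous_trunc m).measurable

theorem ext_trunc (ν₁ ν₂ : Measure ((ℕ → S) × (ℕ → G))) [IsProbabilityMeasure ν₁]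
    [IsProbabilityMeasure ν₂] (h : ∀ m, ν₁.map (trunc m) = ν₂.map (trunc m)) : ν₁ = ν₂ := by
  have key : ∀ (ν : Measure ((ℕ → S) × (ℕ → G))) [IsProbabilityMeasure ν]
      (f : BoundedContinuousFunction ((ℕ → S) × (ℕ → G)) ℝ),
      Tendsto (fun m => ∫ e, f e ∂(ν.map (trunc m))) atTop (𝓝 (∫ e, f e ∂ν)) := by
    intro ν _ f
    have : ∀ m, ∫ e, f e ∂(ν.map (trunc m)) = ∫ e, f (trunc m e) ∂ν := fun m =>
      integral_map (measurable_trunc m).aemeasurable f.continuous.aestronglyMeasurable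
    simp_rw [this]
    refine tendsto_integral_of_dominated_convergence (fun _ => ‖f‖)
      (fun m => (f.continuous.comp (continuous_trunc m)).aestronglyMeasurable)
      (integrable_const _) (fun m => ae_of_all _ fun e => f.norm_coe_le_norm _)
      (ae_of_all _ fun e => ?_)
    refine (f.continuous.tendsto e).comp ?_
    refine (Tendsto.prodMk_nhds (x := e.1) (y := e.2) (mx := fun m => (trunc m e).1)
      (my := fun m => (trunc m e).2) ?_ ?_)
    · refine tendsto_pi_nhds.2 fun k => tendsto_const_nhds.congr' ?_
      filter_upwards [eventually_ge_atTop k] with m hm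
      simp [trunc, hm]
    · refine tendsto_pi_nhds.2 fun k => tendsto_const_nhds.congr' ?_
      filter_upwards [eventually_ge_atTop k] with m hm
      simp [trunc, hm]
  refine ext_of_forall_integral_eq_of_IsFiniteMeasure fun f => ?_
  refine tendsto_nhds_unique (key ν₁ f) ?_
  simp_rw [h]
  exact key ν₂ f

variable [SMul G S] [ContinuousSMul G S]

theorem meas_smul : Measurable (fun p : G × S => p.1 • p.2) :=
  (continuous_fst.smul continuous_snd).measurable

theorem measurable_ext (k : ℕ) : Measurable (ext (S := S) (G := G) k) := by
  have : Continuous (ext (S := S) (G := G) k) := by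
    unfold ext
    refine Continuous.prodMk ?_ ?_
    · exact Continuous.update (by fun_prop) k (by fun_prop)
    · exact Continuous.update (by fun_prop) k (by fun_prop)
  exact this.measurable

theorem rebuild_meas {Ω : Type*} (g0 : G) (X : ℕ → Ω → S) (N : ℕ → Ω → G) (d k : ℕ) :
    Measurable[past X k ⊔ past N k] (rebuild g0 X N d k) := by
  induction d generalizing k with
  | zero =>
    have h : Measurable[past X k ⊔ past N k] (X k) := (meas_past X le_rfl).mono le_sup_left le_rfl
    exact meas_path _ (fun _ => h) (fun _ => measurable_const)
  | succ d ih =>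
    have h : Measurable[past X k ⊔ past N k] (N k) := (meas_past N le_rfl).mono le_sup_right le_rfl
    have h2 := (ih (k + 1)).mono (sup_le_sup (past_anti X k.le_succ) (past_anti N k.le_succ)) le_rfl
    exact (measurable_ext k).comp (Measurable.prodMk h h2)

namespace PS

variable {Ω : Type*} [MeasurableSpace Ω] {n : ℕ} {P : Measure Ω} [IsProbabilityMeasure P]
  {μ : ℕ → Measure G} {lam : ℕ → Measure S}
  {X : ℕ → Ω → S} {N : ℕ → Ω → G}

theorem past_le (h : PS n P μ lam X N) (k : ℕ) : past X k ⊔ past N k ≤ ‹MeasurableSpace Ω› :=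
  sup_le (iSup₂_le fun j _ => (h.measurable_X j).comap_le)
    (iSup₂_le fun j _ => (h.measurable_N j).comap_le)

theorem measurable_Z (h : PS n P μ lam X N) :
    Measurable (fun ω => ((fun k => X k ω, fun k => N k ω) : (ℕ → S) × (ℕ → G))) :=
  Measurable.prodMk (measurable_pi_iff.2 h.measurable_X) (measurable_pi_iff.2 h.measurable_N)

theorem indepFun (h : PS n P μ lam X N) {β : Type*} [mβ : MeasurableSpace β] {k : ℕ} {f : Ω → β}
    (hf : Measurable[past X (k + 1) ⊔ past N (k + 1)] f) : IndepFun (N k) f P := by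
  rw [IndepFun_iff_Indep]
  exact indep_of_indep_of_le_right (h.indep k) (measurable_iff_comap_le.1 hf)

theorem map_pair (h : PS n P μ lam X N) {β : Type*} [mβ : MeasurableSpace β] {k : ℕ} {f : Ω → β}
    (hf : Measurable[past X (k + 1) ⊔ past N (k + 1)] f) :
    P.map (fun ω => (N k ω, f ω)) = (μ k).prod (P.map f) := by
  rw [← h.law_N k]
  exact (indepFun_iff_map_prod_eq_prod_map_map (h.measurable_N k).aemeasurable
    (hf.mono (h.past_le _) le_rfl).aemeasurable).1 (h.indepFun hf)

theorem law_rebuild (h : PS n P μ lam X N) (g0 : G) (d k : ℕ) (hd : k + d = n) :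
    P.map (rebuild g0 X N d k) = lawR g0 μ lam d k := by
  induction d generalizing k with
  | zero =>
    obtain rfl : k = n := hd
    rw [lawR, ← h.law_X, Measure.map_map (by fun_prop) (h.measurable_X k)]
    rfl
  | succ d ih =>
    rw [lawR, ← ih (k + 1) (by omega), ← h.map_pair (rebuild_meas g0 X N d (k + 1)),
      Measure.map_map (measurable_ext k) ((h.measurable_N k).prodMk
        ((rebuild_meas g0 X N d (k + 1)).mono (h.past_le _) le_rfl))]
    rfl

theorem ae_rebuild (h : PS n P μ lam X N) (g0 : G) :
    ∀ᵐ ω ∂P, ∀ d k, k + d = n → (∀ j, k ≤ j → j ≤ n → (rebuild g0 X N d k ω).1 j = X j ω) ∧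
      (∀ j, k ≤ j → j < n → (rebuild g0 X N d k ω).2 j = N j ω) := by
  have : ∀ᵐ ω ∂P, ∀ k, k < n → X k ω = N k ω • X (k + 1) ω := by
    rw [ae_all_iff]; intro k
    by_cases hk : k < n
    · filter_upwards [h.eqn k hk] with ω hω _ using hω
    · exact ae_of_all _ fun ω h => absurd h hk
  filter_upwards [this] with ω hω d
  induction d with
  | zero =>
    intro k hk
    refine ⟨fun j h1 h2 => ?_, fun j h1 h2 => by omega⟩
    obtain rfl : j = k := by omega
    rfl
  | succ d ih =>
    intro k hk
    obtain ⟨i1, i2⟩ := ih (k + 1) (by omega)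
    refine ⟨fun j h1 h2 => ?_, fun j h1 h2 => ?_⟩
    · rcases eq_or_ne j k with rfl | hj
      · simp only [rebuild, ext, Function.update_self]
        rw [i1 _ le_rfl (by omega), hω j (by omega)]
      · simp only [rebuild, ext, Function.update_of_ne hj]
        exact i1 j (by omega) h2
    · rcases eq_or_ne j k with rfl | hj
      · simp only [rebuild, ext, Function.update_self]
      · simp only [rebuild, ext, Function.update_of_ne hj]
        exact i2 j (by omega) h2

theorem law_trunc {m : ℕ} (h : PS (m + 1) P μ lam X N) (g0 : G) :
    (jointLaw P X N).map (trunc m) = (lawR g0 μ lam (m + 1) 0).map (trunc m) := by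
  rw [← h.law_rebuild g0 (m + 1) 0 (by omega), jointLaw,
    Measure.map_map (measurable_trunc m) h.measurable_Z,
    Measure.map_map (measurable_trunc m)
      ((rebuild_meas g0 X N _ _).mono (h.past_le _) le_rfl)]
  refine Measure.map_congr ?_
  filter_upwards [h.ae_rebuild g0] with ω hω
  obtain ⟨h1, h2⟩ := hω (m + 1) 0 (by omega)
  refine Prod.ext (funext fun k => ?_) (funext fun k => ?_)
  · exact (h1 _ (by omega) (by omega)).symm
  · exact (h2 _ (by omega) (by omega)).symm

theorem pred (hconv : ∀ k, lam k = conv (μ k) (lam (k + 1)))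
    (h : PS (n + 1) P μ lam X N) : PS n P μ lam X N where
  measurable_X := h.measurable_X
  measurable_N := h.measurable_N
  eqn k hk := h.eqn k (by omega)
  indep := h.indep
  law_N := h.law_N
  law_X := by
    rw [Measure.map_congr (h.eqn n (by omega)), hconv, conv, ← h.law_X,
      ← h.map_pair (k := n) (f := X (n + 1)) ((meas_past X le_rfl).mono le_sup_left le_rfl),
      Measure.map_map meas_smul ((h.measurable_N n).prodMk (h.measurable_X _))]
    rfl

theorem of_le (hconv : ∀ k, lam k = conv (μ k) (lam (k + 1))) {m : ℕ} (hm : m ≤ n)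
    (h : PS n P μ lam X N) : PS m P μ lam X N := by
  induction n with
  | zero => obtain rfl : m = 0 := by omega
            exact h
  | succ n ih =>
    rcases Nat.lt_or_ge n m with h' | h'
    · obtain rfl : m = n + 1 := by omega
      exact h
    · exact ih h' (h.pred hconv)

end PS

/-- Explicit partial solutions on a product space. -/
def approx (z : ℕ → S × G) : ℕ → ℕ → S
  | 0, k => (z k).1
  | d + 1, k => (z k).2 • approx z d (k + 1)

theorem approx_meas (d k : ℕ) :
    Measurable[past (fun j (z : ℕ → S × G) => z j) k] (fun z : ℕ → S × G => approx z d k) := by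
  induction d generalizing k with
  | zero => exact measurable_fst.comp (meas_past (fun j (z : ℕ → S × G) => z j) le_rfl)
  | succ d ih =>
    have h1 := measurable_snd.comp (meas_past (fun j (z : ℕ → S × G) => z j) (le_refl k))
    have h2 := (ih (k + 1)).mono (past_anti _ k.le_succ) le_rfl
    exact meas_smul.comp (Measurable.prodMk h1 h2)

theorem approx_PS (n : ℕ) (μ : ℕ → Measure G) [hμ : ∀ k, IsProbabilityMeasure (μ k)]
    (lam : ℕ → Measure S) [hlam : ∀ k, IsProbabilityMeasure (lam k)] :
    PS n (Measure.infinitePi fun k => (lam k).prod (μ k)) μ lam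
      (fun k z => approx z (n - k) k) (fun k z => (z k).2) := by
  have hle : ∀ k, past (fun j (z : ℕ → S × G) => z j) k ≤ MeasurableSpace.pi := fun k =>
    iSup₂_le fun j _ => (measurable_pi_apply j).comap_le
  have hev : ∀ k, (Measure.infinitePi fun k => (lam k).prod (μ k)).map (fun z => z k)
      = (lam k).prod (μ k) := fun k => Measure.infinitePi_map_eval _ k
  refine ⟨fun k => (approx_meas _ _).mono (hle k) le_rfl, fun k => by fun_prop, ?_, ?_, ?_, ?_⟩
  · intro k hk
    refine ae_of_all _ fun z => ?_
    have : n - k = (n - (k + 1)) + 1 := by omega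
    simp only [this, approx]
  · intro k
    have hi : iIndep (fun j => MeasurableSpace.comap (fun z : ℕ → S × G => z j) inferInstance)
        (Measure.infinitePi fun k => (lam k).prod (μ k)) :=
      iIndepFun_infinitePi (P := fun k => (lam k).prod (μ k)) (X := fun _ x => x)
        (fun _ => measurable_id)
    have := indep_iSup_of_disjoint (fun j => (measurable_pi_apply j).comap_le) hi
      (S := {k}) (T := {j | j ≥ k + 1}) (by simp)
    refine indep_of_indep_of_le_left (indep_of_indep_of_le_right this ?_) ?_
    · refine sup_le (iSup₂_le fun j hj => ?_) (iSup₂_le fun j hj => ?_)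
      · exact (measurable_iff_comap_le.1 (approx_meas (n - j) j)).trans (past_anti _ hj)
      · exact measurable_iff_comap_le.1
          (measurable_snd.comp (meas_past (fun j (z : ℕ → S × G) => z j) hj))
    · have : Measurable[MeasurableSpace.comap (fun z : ℕ → S × G => z k) inferInstance]
          (fun z : ℕ → S × G => (z k).2) := measurable_snd.comp (comap_measurable _)
      simpa using measurable_iff_comap_le.1 this
  · intro k
    have : (fun z : ℕ → S × G => (z k).2) = Prod.snd ∘ fun z => z k := rfl
    rw [this, ← Measure.map_map measurable_snd (measurable_pi_apply k), hev]
    exact (measurePreserving_snd (μ := lam k) (ν := μ k)).map_eq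
  · have : (fun z : ℕ → S × G => approx z (n - n) n) = Prod.fst ∘ fun z => z n := by
      funext z; simp [approx]
    rw [this, ← Measure.map_map measurable_fst (measurable_pi_apply n), hev]
    exact (measurePreserving_fst (μ := lam n) (ν := μ n)).map_eq

theorem exists_limit (μ : ℕ → Measure G) (hμ : ∀ k, IsProbabilityMeasure (μ k))
    (lam : ℕ → Measure S) (hlam : ∀ k, IsProbabilityMeasure (lam k))
    (hconv : ∀ k, lam k = conv (μ k) (lam (k + 1))) (g0 : G) :
    ∃ P : Measure ((ℕ → S) × (ℕ → G)), IsProbabilityMeasure P ∧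
      ∀ m, P.map (trunc m) = (lawR g0 μ lam (m + 1) 0).map (trunc m) := by
  let Q : ℕ → ProbabilityMeasure ((ℕ → S) × (ℕ → G)) := fun n =>
    ⟨jointLaw (Measure.infinitePi fun k => (lam k).prod (μ k))
      (fun k z => approx z (n - k) k) (fun k z => (z k).2),
      Measure.isProbabilityMeasure_map (approx_PS n μ lam).measurable_Z.aemeasurable⟩
  obtain ⟨P, -, hP⟩ := isCompact_univ (X := ProbabilityMeasure ((ℕ → S) × (ℕ → G)))
    |>.ultrafilter_le_nhds ((hyperfilter ℕ).map Q) (by simp)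
  refine ⟨P, inferInstance, fun m => ?_⟩
  have hQ : Tendsto Q (hyperfilter ℕ : Filter ℕ) (𝓝 P) := hP
  have h1 := ((ProbabilityMeasure.continuous_map (continuous_trunc (S := S) (G := G) m)).tendsto P).comp hQ
  have hc : ∀ n ≥ m + 1, ((Q n).map (continuous_trunc (S := S) (G := G) m).measurable.aemeasurable :
      Measure ((ℕ → S) × (ℕ → G)))
      = (lawR g0 μ lam (m + 1) 0).map (trunc m) := fun n hn =>
    ((approx_PS n μ lam).of_le hconv hn).law_trunc g0
  have h2 : Tendsto (fun n => (Q n).map (continuous_trunc (S := S) (G := G) m).measurable.aemeasurable)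
      (hyperfilter ℕ : Filter ℕ)
      (𝓝 ((Q (m + 1)).map (continuous_trunc (S := S) (G := G) m).measurable.aemeasurable)) := by
    refine tendsto_const_nhds.congr' ?_
    have : ∀ᶠ n in (hyperfilter ℕ : Filter ℕ), n ≥ m + 1 :=
      Nat.hyperfilter_le_atTop (eventually_ge_atTop (m + 1))
    filter_upwards [this] with n hn
    exact Subtype.ext ((hc _ le_rfl).trans (hc n hn).symm)
  have h3 := congrArg (fun p : ProbabilityMeasure ((ℕ → S) × (ℕ → G)) =>
    (p : Measure ((ℕ → S) × (ℕ → G)))) (tendsto_nhds_unique h1 h2)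
  exact h3.trans (hc _ le_rfl)

theorem exists_sol (μ : ℕ → Measure G) (hμ : ∀ k, IsProbabilityMeasure (μ k))
    (lam : ℕ → Measure S) (hlam : ∀ k, IsProbabilityMeasure (lam k))
    (hconv : ∀ k, lam k = conv (μ k) (lam (k + 1))) :
    ∃ P : Measure ((ℕ → S) × (ℕ → G)), IsProbabilityMeasure P ∧
      IsSolution P μ (fun k e => e.1 k) (fun k e => e.2 k) ∧
      ∀ k, P.map (fun e => e.1 k) = lam k := by
  obtain ⟨g0⟩ : Nonempty G := nonempty_of_isProbabilityMeasure (μ 0)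
  obtain ⟨P, hPp, hP⟩ := exists_limit μ hμ lam hlam hconv g0
  refine ⟨P, hPp, ?_⟩
  set R := Measure.infinitePi fun k => (lam k).prod (μ k)
  have hps : ∀ n, PS n R μ lam (fun k z => approx z (n - k) k) (fun k z => (z k).2) :=
    fun n => approx_PS n μ lam
  let Z : ℕ → (ℕ → S × G) → (ℕ → S) × (ℕ → G) := fun n z =>
    (fun k => approx z (n - k) k, fun k => (z k).2)
  have hZ : ∀ n, Measurable (Z n) := fun n => (hps n).measurable_Z
  have key : ∀ m (C : Set ((ℕ → S) × (ℕ → G))), MeasurableSet C → trunc m ⁻¹' C = C →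
      P C = R (Z (m + 1) ⁻¹' C) := by
    intro m C hC hCC
    have h1 := congrArg (fun ν => ν C) ((hP m).trans ((hps (m + 1)).law_trunc g0).symm)
    simp only [Measure.map_apply (measurable_trunc m) hC, hCC] at h1
    rw [h1, jointLaw, Measure.map_apply (hZ _) hC]
  have hX : ∀ k, P.map (fun e => e.1 k) = lam k := by
    intro k
    have hk := ((hps (k + 1)).pred hconv).law_X
    ext A hA
    rw [Measure.map_apply (by fun_prop) hA, key k _ ((show Measurable (fun e : (ℕ → S) × (ℕ → G) => e.1 k) by fun_prop) hA) (by
      ext e; simp [trunc]), ← hk, Measure.map_apply (((hps (k+1)).measurable_X k)) hA]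
    rfl
  refine ⟨⟨fun k => by fun_prop, fun k => by fun_prop, fun k => ?_, fun k => ?_, fun k => ?_⟩, hX⟩
  · have hm : MeasurableSet {e : (ℕ → S) × (ℕ → G) | e.1 k = e.2 k • e.1 (k + 1)} :=
      (isClosed_eq (by fun_prop) (by fun_prop)).measurableSet
    refine ae_iff.2 ?_
    have := key (k + 1) _ hm.compl (by ext e; simp [trunc])
    refine this.trans ?_
    exact ae_iff.1 ((hps (k + 1 + 1)).eqn k (by omega))
  · let t : ℕ → (ℕ → S) × (ℕ → G) → (ℕ → S) × (ℕ → G) := fun i e =>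
      (fun j => e.1 (k + 1 + min j i), fun j => e.2 (k + 1 + min j i))
    have ht : ∀ i, Measurable (t i) := fun i => by
      exact Measurable.prodMk (by fun_prop) (by fun_prop)
    have htt : ∀ i i', i ≤ i' → t i = trunc i ∘ t i' := fun i i' h => by
      funext e
      refine Prod.ext (funext fun j => ?_) (funext fun j => ?_)
      · exact congrArg e.1 (show k + 1 + min j i = k + 1 + min (min j i) i' by omega)
      · exact congrArg e.2 (show k + 1 + min j i = k + 1 + min (min j i) i' by omega)
    have hmain : Indep (⨆ i, MeasurableSpace.comap (t i) inferInstance)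
        (MeasurableSpace.comap (fun e : (ℕ → S) × (ℕ → G) => e.2 k) inferInstance) P := by
      refine indep_iSup_of_monotone (fun i => ?_) (fun i => (ht i).comap_le)
        (Measurable.comap_le (by fun_prop)) ?_
      · rw [← IndepFun_iff_Indep, indepFun_iff_measure_inter_preimage_eq_mul]
        intro A B hA hB
        have tA : trunc (k + 1 + i) ⁻¹' (t i ⁻¹' A) = t i ⁻¹' A := by
          have : t i ∘ trunc (k + 1 + i) = t i := by
            funext e
            refine Prod.ext (funext fun j => ?_) (funext fun j => ?_)
            · exact congrArg e.1 (show min (k + 1 + min j i) (k + 1 + i) = k + 1 + min j i by omega)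
            · exact congrArg e.2 (show min (k + 1 + min j i) (k + 1 + i) = k + 1 + min j i by omega)
          rw [← Set.preimage_comp, this]
        have tB : trunc (k + 1 + i) ⁻¹' ((fun e : (ℕ → S) × (ℕ → G) => e.2 k) ⁻¹' B)
            = (fun e : (ℕ → S) × (ℕ → G) => e.2 k) ⁻¹' B := by
          ext e
          have : min k (k + 1 + i) = k := by omega
          simp [trunc, this]
        have mA := ht i hA
        have mB : MeasurableSet ((fun e : (ℕ → S) × (ℕ → G) => e.2 k) ⁻¹' B) :=
          (show Measurable (fun e : (ℕ → S) × (ℕ → G) => e.2 k) by fun_prop) hB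
        rw [key _ _ mA tA, key _ _ mB tB, key _ _ (mA.inter mB) (by rw [Set.preimage_inter, tA, tB])]
        have hind := (hps (k + 1 + i + 1)).indepFun (k := k) (f := t i ∘ Z (k + 1 + i + 1)) (by
          refine meas_path _ (fun j => ?_) (fun j => ?_)
          · exact (meas_past (fun k' (z : ℕ → S × G) => approx z (k + 1 + i + 1 - k') k')
              (Nat.le_add_right _ _)).mono le_sup_left le_rfl
          · exact (meas_past (fun k (z : ℕ → S × G) => (z k).2)
              (Nat.le_add_right _ _)).mono le_sup_right le_rfl)
        exact (indepFun_iff_measure_inter_preimage_eq_mul.1 hind.symm) A B hA hB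
      · intro i i' h
        simp only [htt i i' h]
        rw [← MeasurableSpace.comap_comp]
        exact MeasurableSpace.comap_mono (measurable_trunc i).comap_le
    refine indep_of_indep_of_le_right hmain.symm ?_
    refine sup_le (iSup₂_le fun j hj => ?_) (iSup₂_le fun j hj => ?_)
    · refine le_iSup_of_le (j - (k + 1)) ?_
      refine measurable_iff_comap_le.1 ?_
      have h1 : Measurable[MeasurableSpace.comap (t (j - (k + 1))) inferInstance]
        (t (j - (k + 1))) := comap_measurable _
      have h2 := (measurable_pi_apply (j - (k + 1))).comp (measurable_fst.comp h1)
      convert h2 using 1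
      funext e
      exact congrArg e.1 (show j = k + 1 + min (j - (k + 1)) (j - (k + 1)) by omega)
    · refine le_iSup_of_le (j - (k + 1)) ?_
      refine measurable_iff_comap_le.1 ?_
      have h1 : Measurable[MeasurableSpace.comap (t (j - (k + 1))) inferInstance]
        (t (j - (k + 1))) := comap_measurable _
      have h2 := (measurable_pi_apply (j - (k + 1))).comp (measurable_snd.comp h1)
      convert h2 using 1
      funext e
      exact congrArg e.2 (show j = k + 1 + min (j - (k + 1)) (j - (k + 1)) by omega)
  · have hk := (hps (k + 1)).law_N k
    ext A hA
    rw [Measure.map_apply (by fun_prop) hA, key k _ ((show Measurable (fun e : (ℕ → S) × (ℕ → G) => e.2 k) by fun_prop) hA) (by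
      ext e; simp [trunc]), ← hk, Measure.map_apply (((hps (k+1)).measurable_N k)) hA]
    rfl

theorem unique_law (μ : ℕ → Measure G) (hμ : ∀ k, IsProbabilityMeasure (μ k))
    (lam : ℕ → Measure S)
    {Ω₁ : Type w} [MeasurableSpace Ω₁] (P₁ : Measure Ω₁)
    (X₁ : ℕ → Ω₁ → S) (N₁ : ℕ → Ω₁ → G)
    {Ω₂ : Type w₂} [MeasurableSpace Ω₂] (P₂ : Measure Ω₂)
    (X₂ : ℕ → Ω₂ → S) (N₂ : ℕ → Ω₂ → G) [IsProbabilityMeasure P₁] [IsProbabilityMeasure P₂]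
    (h₁ : IsSolution P₁ μ X₁ N₁) (h₂ : IsSolution P₂ μ X₂ N₂)
    (l₁ : ∀ k, P₁.map (X₁ k) = lam k) (l₂ : ∀ k, P₂.map (X₂ k) = lam k) :
    jointLaw P₁ X₁ N₁ = jointLaw P₂ X₂ N₂ := by
  obtain ⟨g0⟩ : Nonempty G := nonempty_of_isProbabilityMeasure (μ 0)
  have p₁ : ∀ n, PS n P₁ μ lam X₁ N₁ := fun n =>
    ⟨h₁.measurable_X, h₁.measurable_N, fun k _ => h₁.eqn k, h₁.indep, h₁.law_N, l₁ n⟩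
  have p₂ : ∀ n, PS n P₂ μ lam X₂ N₂ := fun n =>
    ⟨h₂.measurable_X, h₂.measurable_N, fun k _ => h₂.eqn k, h₂.indep, h₂.law_N, l₂ n⟩
  have : IsProbabilityMeasure (jointLaw P₁ X₁ N₁) :=
    Measure.isProbabilityMeasure_map (p₁ 0).measurable_Z.aemeasurable
  have : IsProbabilityMeasure (jointLaw P₂ X₂ N₂) :=
    Measure.isProbabilityMeasure_map (p₂ 0).measurable_Z.aemeasurable
  exact ext_trunc _ _ fun m => ((p₁ (m + 1)).law_trunc g0).trans ((p₂ (m + 1)).law_trunc g0).symm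

end

end TsirelsonAux

section Tsirelson

variable {S : Type u} {G : Type v}
  [TopologicalSpace S] [CompactSpace S] [TopologicalSpace.MetrizableSpace S]
  [SecondCountableTopology S] [MeasurableSpace S] [BorelSpace S]
  [TopologicalSpace G] [CompactSpace G] [TopologicalSpace.MetrizableSpace G]
  [SecondCountableTopology G] [MeasurableSpace G] [BorelSpace G]
  [Semigroup G] [ContinuousMul G]
  [SMul G S] [ContinuousSMul G S] [IsScalarTower G G S]

/-- If a family of probability laws on `S` solves the convolution equation
`λ_k = μ_k * λ_{k-1}`, then there is a solution of Tsirelson's equation, unique up to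
identity in law, whose one-dimensional marginals are the `λ_k`. -/
theorem tsirelson_exists_unique_of_convolution_eq
    (μ : ℕ → Measure G) (hμ : ∀ k, IsProbabilityMeasure (μ k))
    (lam : ℕ → Measure S) (hlam : ∀ k, IsProbabilityMeasure (lam k))
    (hconv : ∀ k, lam k = conv (μ k) (lam (k + 1))) :
    (∃ (Ω : Type (max u v)) (_ : MeasurableSpace Ω) (P : Measure Ω)
        (X : ℕ → Ω → S) (N : ℕ → Ω → G),
        IsProbabilityMeasure P ∧ IsSolution P μ X N ∧ ∀ k, P.map (X k) = lam k) ∧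
    (∀ (Ω₁ : Type w) (_ : MeasurableSpace Ω₁) (P₁ : Measure Ω₁)
        (X₁ : ℕ → Ω₁ → S) (N₁ : ℕ → Ω₁ → G)
        (Ω₂ : Type w₂) (_ : MeasurableSpace Ω₂) (P₂ : Measure Ω₂)
        (X₂ : ℕ → Ω₂ → S) (N₂ : ℕ → Ω₂ → G),
        IsProbabilityMeasure P₁ → IsProbabilityMeasure P₂ →
        IsSolution P₁ μ X₁ N₁ → IsSolution P₂ μ X₂ N₂ →
        (∀ k, P₁.map (X₁ k) = lam k) → (∀ k, P₂.map (X₂ k) = lam k) →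
        jointLaw P₁ X₁ N₁ = jointLaw P₂ X₂ N₂) := by
  refine ⟨?_, ?_⟩
  · obtain ⟨P, hP, hs, hl⟩ := TsirelsonAux.exists_sol μ hμ lam hlam hconv
    exact ⟨_, _, P, _, _, hP, hs, hl⟩
  · intro Ω₁ _ P₁ X₁ N₁ Ω₂ _ P₂ X₂ N₂ _ _ h₁ h₂ l₁ l₂
    exact TsirelsonAux.unique_law μ hμ lam P₁ X₁ N₁ P₂ X₂ N₂ h₁ h₂ l₁ l₂

end Tsirelson
end

section
/- For any noise law μ = (μ_k)_{k∈-ℕ} of Borel probability measures on Σ, there exists a solution of Tsirelson's equation with noise law μ (on some probability space). -/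
open MeasureTheory ProbabilityTheory Filter Topology
open scoped NNReal ENNReal

universe u v w w₂

/-- `auxX x₀ j k ω = ω k • ω (k+1) • ⋯ • ω (k+j-1) • x₀`. -/
def auxX {S G : Type*} [SMul G S] (x₀ : S) : ℕ → ℕ → (ℕ → G) → S
  | 0, _, _ => x₀
  | j + 1, k, ω => ω k • auxX x₀ j (k + 1) ω

/-- the σ-field of the coordinates with index at least `k` -/
def coordPast (G : Type*) [MeasurableSpace G] (k : ℕ) : MeasurableSpace (ℕ → G) :=
  ⨆ i ∈ Set.Ici k, MeasurableSpace.comap (fun ω : ℕ → G => ω i) inferInstance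

theorem coordPast_anti (G : Type*) [MeasurableSpace G] {k l : ℕ} (h : k ≤ l) :
    coordPast G l ≤ coordPast G k :=
  biSup_mono fun _ hi => le_trans h hi

theorem coordPast_le (G : Type*) [MeasurableSpace G] (k : ℕ) :
    coordPast G k ≤ MeasurableSpace.pi :=
  iSup₂_le fun i _ => (measurable_pi_apply i).comap_le

theorem measurable_eval_coordPast (G : Type*) [MeasurableSpace G] {k i : ℕ} (h : k ≤ i) :
    Measurable[coordPast G k] (fun ω : ℕ → G => ω i) := by
  rw [measurable_iff_comap_le]
  exact le_iSup₂_of_le i h le_rfl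

theorem measurable_auxX {S G : Type*} [MeasurableSpace S] [MeasurableSpace G] [SMul G S]
    (hm : Measurable fun p : G × S => p.1 • p.2) (x₀ : S) (j : ℕ) :
    ∀ k l : ℕ, l ≤ k → Measurable[coordPast G l] (auxX (G := G) x₀ j k) := by
  induction j with
  | zero => intro k l _; exact @measurable_const _ _ _ (coordPast G l) x₀
  | succ j ih =>
    intro k l h
    have h1 := measurable_eval_coordPast G h
    have h2 := ih (k + 1) l (by omega)
    exact hm.comp (h1.prodMk h2)

/-- The approximating process started from `x₀` at index `n`. -/
def approxX {S G : Type*} [SMul G S] (x₀ : S) (n : ℕ) (ω : ℕ → G) : (ℕ → S) × (ℕ → G) :=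
  (fun k => auxX x₀ (n - k) k ω, ω)

/-- shift of the paths by `k` -/
def shiftP {S G : Type*} (k : ℕ) (p : (ℕ → S) × (ℕ → G)) : (ℕ → S) × (ℕ → G) :=
  (fun j => p.1 (k + j), fun j => p.2 (k + j))

theorem measurable_approxX {S G : Type*} [MeasurableSpace S] [MeasurableSpace G] [SMul G S]
    (hm : Measurable fun p : G × S => p.1 • p.2) (x₀ : S) (n : ℕ) :
    Measurable (approxX (G := G) x₀ n) :=
  (measurable_pi_lambda _ fun k =>
    (measurable_auxX hm x₀ (n - k) k k le_rfl).mono (coordPast_le G k) le_rfl).prodMk measurable_id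

theorem measurable_shift_approxX {S G : Type*} [MeasurableSpace S] [MeasurableSpace G] [SMul G S]
    (hm : Measurable fun p : G × S => p.1 • p.2) (x₀ : S) (n k : ℕ) :
    Measurable[coordPast G k] (fun ω => shiftP k (approxX (G := G) x₀ n ω)) := by
  have h1 : Measurable[coordPast G k] fun (ω : ℕ → G) (j : ℕ) =>
      auxX x₀ (n - (k + j)) (k + j) ω :=
    @measurable_pi_lambda _ _ _ (coordPast G k) _ _ fun j =>
      measurable_auxX hm x₀ _ (k + j) k (by omega)
  have h2 : Measurable[coordPast G k] fun (ω : ℕ → G) (j : ℕ) => ω (k + j) :=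
    @measurable_pi_lambda _ _ _ (coordPast G k) _ _ fun j =>
      measurable_eval_coordPast G (i := k + j) (by omega)
  exact h1.prodMk h2

theorem indep_approx {S G : Type*} [MeasurableSpace S] [MeasurableSpace G] [SMul G S]
    (hm : Measurable fun p : G × S => p.1 • p.2) (x₀ : S) (n k : ℕ)
    (μ : ℕ → Measure G) [∀ k, IsProbabilityMeasure (μ k)] :
    IndepFun (fun ω : ℕ → G => ω k) (fun ω => shiftP (k + 1) (approxX x₀ n ω))
      (Measure.infinitePi μ) := by
  have h1 : iIndepFun (fun (i : ℕ) (ω : ℕ → G) => ω i) (Measure.infinitePi μ) :=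
    iIndepFun_infinitePi (X := fun _ ω => ω) (by fun_prop)
  have h2 := indep_iSup_of_disjoint (fun i => (measurable_pi_apply i).comap_le) h1
    (S := {k}) (T := Set.Ici (k + 1)) (by simp)
  rw [IndepFun_iff_Indep]
  refine indep_of_indep_of_le_left (indep_of_indep_of_le_right h2 ?_) ?_
  · exact (measurable_shift_approxX hm x₀ n (k + 1)).comap_le
  · simp

/-- Independence passes to weak limits. -/
theorem indepFun_of_tendsto {Ω A B ι : Type*}
    [TopologicalSpace Ω] [MeasurableSpace Ω] [OpensMeasurableSpace Ω]
    [TopologicalSpace A] [MeasurableSpace A] [BorelSpace A]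
    [TopologicalSpace.MetrizableSpace A] [SecondCountableTopology A]
    [TopologicalSpace B] [MeasurableSpace B] [BorelSpace B]
    [TopologicalSpace.MetrizableSpace B] [SecondCountableTopology B]
    {L : Filter ι} [L.NeBot] {Ps : ι → ProbabilityMeasure Ω} {P : ProbabilityMeasure Ω}
    (h : Tendsto Ps L (𝓝 P)) {f : Ω → A} {g : Ω → B} (hf : Continuous f) (hg : Continuous g)
    (hi : ∀ i, IndepFun f g (Ps i : Measure Ω)) : IndepFun f g (P : Measure Ω) := by
  have key (Q : ProbabilityMeasure Ω) : IndepFun f g (Q : Measure Ω) ↔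
      Q.map (hf.prodMk hg).measurable.aemeasurable =
        (Q.map hf.measurable.aemeasurable).prod (Q.map hg.measurable.aemeasurable) := by
    rw [indepFun_iff_map_prod_eq_prod_map_map hf.measurable.aemeasurable
      hg.measurable.aemeasurable]
    exact ⟨fun h => Subtype.ext h, fun h => congrArg Subtype.val h⟩
  rw [key]
  have t1 := ((ProbabilityMeasure.continuous_map (hf.prodMk hg)).tendsto P).comp h
  have t2 := (((ProbabilityMeasure.continuous_prod (α := A) (β := B)).comp
    ((ProbabilityMeasure.continuous_map hf).prodMk
      (ProbabilityMeasure.continuous_map hg))).tendsto P).comp h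
  refine tendsto_nhds_unique (t1.congr fun i => ?_) t2
  exact (key _).1 (hi i)

section Tsirelson

variable {S : Type u} {G : Type v}
  [TopologicalSpace S] [CompactSpace S] [TopologicalSpace.MetrizableSpace S]
  [SecondCountableTopology S] [MeasurableSpace S] [BorelSpace S]
  [TopologicalSpace G] [CompactSpace G] [TopologicalSpace.MetrizableSpace G]
  [SecondCountableTopology G] [MeasurableSpace G] [BorelSpace G]
  [Semigroup G] [ContinuousMul G]
  [SMul G S] [ContinuousSMul G S] [IsScalarTower G G S]

/-- For any noise law there exists a solution of Tsirelson's equation. -/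
theorem tsirelson_exists_solution [Nonempty S]
    (μ : ℕ → Measure G) (hμ : ∀ k, IsProbabilityMeasure (μ k)) :
    ∃ (Ω : Type (max u v)) (_ : MeasurableSpace Ω) (P : Measure Ω)
      (X : ℕ → Ω → S) (N : ℕ → Ω → G),
      IsProbabilityMeasure P ∧ IsSolution P μ X N := by
  obtain ⟨x₀⟩ := ‹Nonempty S›
  have hm : Measurable fun p : G × S => p.1 • p.2 := continuous_smul.measurable
  let Ps : ℕ → ProbabilityMeasure ((ℕ → S) × (ℕ → G)) := fun n =>
    ⟨(Measure.infinitePi μ).map (approxX x₀ n),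
      Measure.isProbabilityMeasure_map (measurable_approxX hm x₀ n).aemeasurable⟩
  let L : Ultrafilter ℕ := Ultrafilter.of atTop
  have hL : (L : Filter ℕ) ≤ atTop := Ultrafilter.of_le atTop
  obtain ⟨P, -, hP'⟩ := isCompact_univ.ultrafilter_le_nhds (L.map Ps) (by simp)
  have hP : Tendsto Ps L (𝓝 P) := hP'
  have cX (k : ℕ) : Continuous fun p : (ℕ → S) × (ℕ → G) => p.1 k := by fun_prop
  have cN (k : ℕ) : Continuous fun p : (ℕ → S) × (ℕ → G) => p.2 k := by fun_prop
  have cS (k : ℕ) : Continuous (shiftP (S := S) (G := G) k) := by unfold shiftP; fun_prop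
  refine ⟨(ℕ → S) × (ℕ → G), inferInstance, P, fun k p => p.1 k, fun k p => p.2 k,
    inferInstance, ⟨fun k => (cX k).measurable, fun k => (cN k).measurable, ?_, ?_, ?_⟩⟩
  · intro k
    have hF : IsClosed {p : (ℕ → S) × (ℕ → G) | p.1 k = p.2 k • p.1 (k + 1)} :=
      isClosed_eq (cX k) ((cN k).smul (cX (k + 1)))
    have h1 := ProbabilityMeasure.limsup_measure_closed_le_of_tendsto hP hF
    have h2 : ∀ᶠ n in (L : Filter ℕ), (Ps n : Measure ((ℕ → S) × (ℕ → G)))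
        {p : (ℕ → S) × (ℕ → G) | p.1 k = p.2 k • p.1 (k + 1)} = 1 := by
      filter_upwards [hL (eventually_gt_atTop k)] with n hn
      change (Measure.infinitePi μ).map (approxX x₀ n) _ = 1
      rw [Measure.map_apply (measurable_approxX hm x₀ n) hF.measurableSet]
      convert measure_univ (μ := Measure.infinitePi μ)
      ext ω
      have : n - k = (n - (k + 1)) + 1 := by omega
      simp [approxX, this, auxX]
    rw [limsup_congr h2, limsup_const] at h1
    have h3 : (P : Measure ((ℕ → S) × (ℕ → G)))
        {p : (ℕ → S) × (ℕ → G) | p.1 k = p.2 k • p.1 (k + 1)} = 1 := le_antisymm prob_le_one h1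
    exact (mem_ae_iff_prob_eq_one hF.measurableSet).2 h3
  · intro k
    have h1 : IndepFun (fun p : (ℕ → S) × (ℕ → G) => p.2 k) (shiftP (k + 1))
        (P : Measure ((ℕ → S) × (ℕ → G))) := by
      refine indepFun_of_tendsto hP (cN k) (cS (k + 1)) fun n => ?_
      change IndepFun _ _ ((Measure.infinitePi μ).map (approxX x₀ n))
      rw [indepFun_iff_map_prod_eq_prod_map_map (cN k).measurable.aemeasurable
        (cS (k + 1)).measurable.aemeasurable]
      have h2 : IndepFun (fun ω : ℕ → G => ω k) (shiftP (k + 1) ∘ approxX x₀ n)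
        (Measure.infinitePi μ) := indep_approx hm x₀ n k μ
      rw [indepFun_iff_map_prod_eq_prod_map_map (measurable_pi_apply k).aemeasurable
        ((cS (k + 1)).measurable.comp (measurable_approxX hm x₀ n)).aemeasurable] at h2
      rw [Measure.map_map ((cN k).measurable.prodMk (cS (k + 1)).measurable)
        (measurable_approxX hm x₀ n), Measure.map_map (cN k).measurable
        (measurable_approxX hm x₀ n), Measure.map_map (cS (k + 1)).measurable
        (measurable_approxX hm x₀ n)]
      exact h2
    rw [IndepFun_iff_Indep] at h1
    refine indep_of_indep_of_le_right h1 ?_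
    have hs : Measurable[MeasurableSpace.comap (shiftP (S := S) (G := G) (k + 1)) inferInstance]
        (shiftP (S := S) (G := G) (k + 1)) := comap_measurable _
    refine sup_le (iSup₂_le fun j hj => ?_) (iSup₂_le fun j hj => ?_)
    · obtain ⟨i, rfl⟩ := Nat.exists_eq_add_of_le hj
      exact ((cX i).measurable.comp hs).comap_le
    · obtain ⟨i, rfl⟩ := Nat.exists_eq_add_of_le hj
      exact ((cN i).measurable.comp hs).comap_le
  · intro k
    have t1 := ((ProbabilityMeasure.continuous_map (cN k)).tendsto P).comp hP
    let m : ProbabilityMeasure G := ⟨μ k, hμ k⟩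
    have t2 : Tendsto (fun _ : ℕ => m) L (𝓝 m) := tendsto_const_nhds
    have h := tendsto_nhds_unique (t1.congr fun n => ?_) t2
    · exact congrArg Subtype.val h
    · apply Subtype.ext
      change ((Measure.infinitePi μ).map (approxX x₀ n)).map (fun p => p.2 k) = μ k
      rw [Measure.map_map (cN k).measurable (measurable_approxX hm x₀ n)]
      exact Measure.infinitePi_map_eval μ k

end Tsirelson
end

section
/- Suppose that pathwise uniqueness holds for Tsirelson's equation with noise law μ, i.e., any two solutions defined on a common probability space and sharing the same noise process N coincide a.s. Then uniqueness in law holds (any two solutions have the same law of (X,N)) and every solution is strong. -/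
open MeasureTheory ProbabilityTheory Filter Topology
open scoped NNReal ENNReal

universe u v w w₂

section Helpers

theorem past_measurable {Ω α : Type*} [MeasurableSpace α] (Y : ℕ → Ω → α) {k j : ℕ} (h : k ≤ j) :
    Measurable[past Y k] (Y j) := by
  rw [measurable_iff_comap_le]
  exact le_iSup₂_of_le j h le_rfl

theorem past_comap {Ω Ω' α : Type*} [MeasurableSpace α] (φ : Ω → Ω') (Y : ℕ → Ω' → α) (k : ℕ) :
    (past Y k).comap φ = past (fun j ω => Y j (φ ω)) k := by
  simp only [past, MeasurableSpace.comap_iSup, MeasurableSpace.comap_comp]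
  rfl

theorem past_le {Ω α : Type*} [MeasurableSpace α] [m : MeasurableSpace Ω] (Y : ℕ → Ω → α)
    (h : ∀ k, Measurable (Y k)) (k : ℕ) : past Y k ≤ m :=
  iSup₂_le fun j _ => (h j).comap_le

theorem indep_comap_iff {Ω Ω' : Type*} (m₁ m₂ : MeasurableSpace Ω')
    [mΩ : MeasurableSpace Ω] [mΩ' : MeasurableSpace Ω']
    (P : Measure Ω) (φ : Ω → Ω') (hφ : Measurable φ)
    (h₁ : m₁ ≤ mΩ') (h₂ : m₂ ≤ mΩ') :
    Indep (m₁.comap φ) (m₂.comap φ) P ↔ Indep m₁ m₂ (P.map φ) := by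
  rw [Indep_iff, Indep_iff]
  constructor
  · intro h s t hs ht
    rw [Measure.map_apply hφ ((h₁ _ hs).inter (h₂ _ ht)), Measure.map_apply hφ (h₁ _ hs),
      Measure.map_apply hφ (h₂ _ ht)]
    exact h _ _ ⟨s, hs, rfl⟩ ⟨t, ht, rfl⟩
  · rintro h _ _ ⟨s, hs, rfl⟩ ⟨t, ht, rfl⟩
    have := h s t hs ht
    rwa [Measure.map_apply hφ ((h₁ _ hs).inter (h₂ _ ht)), Measure.map_apply hφ (h₁ _ hs),
      Measure.map_apply hφ (h₂ _ ht)] at this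

/-- Being a solution only depends on the joint law. -/
theorem isSolution_iff_law {Ω S G : Type*} [MeasurableSpace Ω] [MeasurableSpace S]
    [MeasurableSpace G] [SMul G S] [MeasurableEq S] (hsm : Measurable fun p : G × S => p.1 • p.2)
    (P : Measure Ω) (μ : ℕ → Measure G) (X : ℕ → Ω → S) (N : ℕ → Ω → G)
    (hX : ∀ k, Measurable (X k)) (hN : ∀ k, Measurable (N k)) :
    IsSolution P μ X N ↔ IsSolution (jointLaw P X N) μ (fun k p => p.1 k) (fun k p => p.2 k) := by
  set φ : Ω → (ℕ → S) × (ℕ → G) := fun ω => (fun k => X k ω, fun k => N k ω) with hφdef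
  have hφ : Measurable φ := by fun_prop
  have hx : ∀ k, Measurable (fun p : (ℕ → S) × (ℕ → G) => p.1 k) := fun k => by fun_prop
  have hn : ∀ k, Measurable (fun p : (ℕ → S) × (ℕ → G) => p.2 k) := fun k => by fun_prop
  have key : ∀ k, Indep (MeasurableSpace.comap (N k) inferInstance)
      (past X (k + 1) ⊔ past N (k + 1)) P ↔
      Indep (MeasurableSpace.comap (fun p : (ℕ → S) × (ℕ → G) => p.2 k) inferInstance)
      (past (fun k (p : (ℕ → S) × (ℕ → G)) => p.1 k) (k + 1) ⊔
        past (fun k (p : (ℕ → S) × (ℕ → G)) => p.2 k) (k + 1)) (jointLaw P X N) := by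
    intro k
    change _ ↔ Indep _ _ (P.map φ)
    rw [← indep_comap_iff _ _ P φ hφ (hn k).comap_le
      (sup_le (past_le _ hx _) (past_le _ hn _)), MeasurableSpace.comap_sup,
      past_comap, past_comap, MeasurableSpace.comap_comp]
    rfl
  have key2 : ∀ k, (X k =ᵐ[P] fun ω => N k ω • X (k + 1) ω) ↔
      ((fun p : (ℕ → S) × (ℕ → G) => p.1 k) =ᵐ[jointLaw P X N] fun p => p.2 k • p.1 (k + 1)) := by
    intro k
    have hm : MeasurableSet {p : (ℕ → S) × (ℕ → G) | p.1 k = p.2 k • p.1 (k + 1)} :=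
      measurableSet_eq_fun (hx k) (hsm.comp ((hn k).prodMk (hx (k + 1))))
    exact (ae_map_iff hφ.aemeasurable hm).symm
  have key3 : ∀ k, (jointLaw P X N).map (fun p => p.2 k) = P.map (N k) := by
    intro k
    rw [jointLaw, Measure.map_map (hn k) hφ]; rfl
  constructor
  · intro h
    exact ⟨hx, hn, fun k => (key2 k).1 (h.eqn k), fun k => (key k).1 (h.indep k),
      fun k => (key3 k).trans (h.law_N k)⟩
  · intro h
    exact ⟨hX, hN, fun k => (key2 k).2 (h.eqn k), fun k => (key k).2 (h.indep k),
      fun k => (key3 k).symm.trans (h.law_N k)⟩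

theorem noise_cylinder {Ω S G : Type*} [MeasurableSpace Ω] [MeasurableSpace S]
    [MeasurableSpace G] [SMul G S] {P : Measure Ω} [IsProbabilityMeasure P] {μ : ℕ → Measure G}
    {X : ℕ → Ω → S} {N : ℕ → Ω → G} (h : IsSolution P μ X N) (t : ℕ → Set G)
    (ht : ∀ i, MeasurableSet (t i)) (n : ℕ) : ∀ k,
    P {ω | ∀ i < n, N (k + i) ω ∈ t (k + i)} = ∏ i ∈ Finset.range n, μ (k + i) (t (k + i)) := by
  induction n with
  | zero => intro k; simp
  | succ n ih =>
    intro k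
    have e : {ω | ∀ i < n + 1, N (k + i) ω ∈ t (k + i)} =
        N k ⁻¹' t k ∩ {ω | ∀ i < n, N (k + 1 + i) ω ∈ t (k + 1 + i)} := by
      ext ω
      simp only [Set.mem_ofPred_eq, Set.mem_inter_iff, Set.mem_preimage]
      constructor
      · intro H
        refine ⟨by simpa using H 0 (by omega), fun i hi => ?_⟩
        have := H (i + 1) (by omega)
        rwa [show k + (i + 1) = k + 1 + i by omega] at this
      · rintro ⟨h0, H⟩ i hi
        rcases i with _ | i
        · simpa using h0
        · have := H i (by omega)
          rwa [show k + 1 + i = k + (i + 1) by omega] at this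
    have hm : MeasurableSet[past X (k + 1) ⊔ past N (k + 1)]
        {ω | ∀ i < n, N (k + 1 + i) ω ∈ t (k + 1 + i)} := by
      refine (le_sup_right : past N (k + 1) ≤ _) _ ?_
      have : {ω | ∀ i < n, N (k + 1 + i) ω ∈ t (k + 1 + i)} =
          ⋂ i, ⋂ (_ : i < n), N (k + 1 + i) ⁻¹' t (k + 1 + i) := by ext; simp
      rw [this]
      refine @MeasurableSet.iInter _ _ (past N (k + 1)) _ _ fun i => ?_
      refine @MeasurableSet.iInter _ _ (past N (k + 1)) _ _ fun _ => ?_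
      exact past_measurable N (by omega) (ht _)
    rw [e, (Indep_iff _ _ _).1 (h.indep k) _ _ ⟨t k, ht k, rfl⟩ hm, ih (k + 1),
      Finset.prod_range_succ', mul_comm]
    simp only [add_zero]
    congr 1
    · exact Finset.prod_congr rfl fun i _ => by rw [show k + (i + 1) = k + 1 + i by omega]
    · rw [← h.law_N k, Measure.map_apply (h.measurable_N k) (ht k)]

theorem noise_law {Ω S G : Type*} [MeasurableSpace Ω] [MeasurableSpace S]
    [MeasurableSpace G] [SMul G S] {P : Measure Ω} [IsProbabilityMeasure P] {μ : ℕ → Measure G}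
    [∀ k, IsProbabilityMeasure (μ k)]
    {X : ℕ → Ω → S} {N : ℕ → Ω → G} (h : IsSolution P μ X N) :
    P.map (fun ω k => N k ω) = Measure.infinitePi μ := by
  classical
  have hN := h.measurable_N
  refine Measure.eq_infinitePi _ fun s t ht => ?_
  rw [Measure.map_apply (by fun_prop) (MeasurableSet.pi s.countable_toSet fun i _ => ht i)]
  obtain ⟨n, hn⟩ := s.exists_nat_subset_range
  have := noise_cylinder h (fun i => if i ∈ s then t i else Set.univ)
    (fun i => by split_ifs <;> simp [ht]) n 0
  simp only [zero_add] at this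
  have e : (fun ω k => N k ω) ⁻¹' (s : Set ℕ).pi t =
      {ω | ∀ i < n, N i ω ∈ if i ∈ s then t i else Set.univ} := by
    ext ω
    simp only [Set.mem_preimage, Set.mem_pi, Set.mem_ofPred_eq, Finset.mem_coe]
    constructor
    · intro H i _
      split_ifs with hi
      · exact H i hi
      · trivial
    · intro H i hi
      simpa [hi] using H i (Finset.mem_range.1 (hn hi))
  rw [e, this, ← Finset.prod_subset hn]
  · exact Finset.prod_congr rfl fun i hi => by simp [hi]
  · intro i _ hi
    simp [hi]

/-- A Markov kernel whose square lives on the diagonal is a.e. deterministic. -/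
theorem deterministic_of_diag {H E : Type*} [MeasurableSpace H] [MeasurableSpace E]
    [StandardBorelSpace E] [Nonempty E] (l : Measure H) [IsProbabilityMeasure l]
    (κ : Kernel H E) [IsMarkovKernel κ]
    (h : ∀ᵐ p ∂(l ⊗ₘ (κ ×ₖ κ)), p.2.1 = p.2.2) :
    ∃ F : H → E, Measurable F ∧ ∀ᵐ p ∂(l ⊗ₘ κ), p.2 = F p.1 := by
  have he := measurableEmbedding_embeddingReal E
  obtain ⟨r, hr, hre⟩ := he.exists_measurable_extend measurable_id (fun _ => inferInstance)
  have hF : Measurable fun n => r (∫ x, embeddingReal E x ∂κ n) :=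
    hr.comp (he.measurable.stronglyMeasurable.integral_kernel).measurable
  refine ⟨_, hF, ?_⟩
  refine Measure.ae_compProd_of_ae_ae
    (measurableSet_eq_fun measurable_snd (hF.comp measurable_fst)) ?_
  filter_upwards [Measure.ae_ae_of_ae_compProd h] with n hn
  rw [Kernel.prod_apply] at hn
  obtain ⟨x, hx⟩ := (Measure.ae_ae_of_ae_prod hn).exists
  have : ∫ y, embeddingReal E y ∂κ n = embeddingReal E x := by
    rw [integral_congr_ae (g := fun _ => embeddingReal E x)]
    · simp
    · filter_upwards [hx] with y hy
      rw [hy]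
  filter_upwards [hx] with y hy
  rw [this, ← hy]
  exact (congrFun hre x).symm

/-- Removal of one irrelevant noise variable. -/
theorem remove_noise {Ω S G : Type*} [MeasurableSpace Ω] [MeasurableSpace S]
    [MeasurableSpace G] [SMul G S] [MeasurableEq S]
    {P : Measure Ω} [IsProbabilityMeasure P] {μ : ℕ → Measure G}
    {X : ℕ → Ω → S} {N : ℕ → Ω → G} (h : IsSolution P μ X N) {j k : ℕ} (hjk : j < k)
    (F : (ℕ → G) → S) (hF : Measurable F) (hXF : ∀ᵐ ω ∂P, X k ω = F fun i => N (j + i) ω) :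
    ∃ F' : (ℕ → G) → S, Measurable F' ∧ ∀ᵐ ω ∂P, X k ω = F' fun i => N (j + 1 + i) ω := by
  let c : G → (ℕ → G) → ℕ → G := fun g z i => Nat.casesOn i g z
  have hc : Measurable fun p : G × (ℕ → G) => c p.1 p.2 := by
    refine measurable_pi_lambda _ fun i => ?_
    rcases i with _ | i
    · exact measurable_fst
    · exact (measurable_pi_apply i).comp measurable_snd
  let Z : Ω → S × (ℕ → G) := fun ω => (X k ω, fun i => N (j + 1 + i) ω)
  have hX := h.measurable_X
  have hN := h.measurable_N
  have hZ : Measurable Z := by fun_prop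
  have hZp : Measurable[past X (j + 1) ⊔ past N (j + 1)] Z := by
    refine Measurable.prodMk (m := past X (j + 1) ⊔ past N (j + 1)) ?_ ?_
    · exact (past_measurable X hjk).mono le_sup_left le_rfl
    · refine @measurable_pi_lambda _ _ _ (past X (j + 1) ⊔ past N (j + 1)) _ _ fun i => ?_
      exact (past_measurable N (by omega)).mono le_sup_right le_rfl
  have hind : IndepFun (N j) Z P :=
    (IndepFun_iff_Indep _ _ _).2 (indep_of_indep_of_le_right (h.indep j) hZp.comap_le)
  have hm : MeasurableSet {p : G × (S × (ℕ → G)) | p.2.1 = F (c p.1 p.2.2)} :=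
    measurableSet_eq_fun (by fun_prop)
      (hF.comp (hc.comp (measurable_fst.prodMk (measurable_snd.comp measurable_snd))))
  have h1 : ∀ᵐ p ∂(P.map fun ω => (N j ω, Z ω)), p.2.1 = F (c p.1 p.2.2) := by
    rw [ae_map_iff (by fun_prop) hm]
    filter_upwards [hXF] with ω hω
    change X k ω = _
    rw [hω]
    congr 1
    funext i
    rcases i with _ | i
    · rfl
    · change N (j + (i + 1)) ω = N (j + 1 + i) ω
      rw [show j + (i + 1) = j + 1 + i by omega]
  rw [hind.map_prod_eq_prod_map_map (by fun_prop) (by fun_prop)] at h1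
  have : IsProbabilityMeasure (P.map (N j)) := Measure.isProbabilityMeasure_map (by fun_prop)
  obtain ⟨g, hg⟩ := (Measure.ae_ae_of_ae_prod h1).exists
  refine ⟨fun z => F (c g z), hF.comp (hc.comp measurable_prodMk_left), ?_⟩
  exact ae_of_ae_map hZ.aemeasurable hg

/-- Gluing two solutions along their noise. -/
theorem glue {S : Type u} {G : Type v} [MeasurableSpace S] [StandardBorelSpace S] [Nonempty S]
    [MeasurableSpace G] [SMul G S]
    (hsm : Measurable fun p : G × S => p.1 • p.2)
    (μ : ℕ → Measure G)
    (hpw : ∀ (Ω : Type (max u v)) (_ : MeasurableSpace Ω) (P : Measure Ω)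
      (X X' : ℕ → Ω → S) (N : ℕ → Ω → G),
      IsProbabilityMeasure P → IsSolution P μ X N → IsSolution P μ X' N →
      ∀ k, X k =ᵐ[P] X' k)
    (l : Measure (ℕ → G)) [IsProbabilityMeasure l] (κ₁ κ₂ : Kernel (ℕ → G) (ℕ → S))
    [IsMarkovKernel κ₁] [IsMarkovKernel κ₂]
    (h₁ : IsSolution ((l ⊗ₘ κ₁).map Prod.swap) μ (fun k p => p.1 k) (fun k p => p.2 k))
    (h₂ : IsSolution ((l ⊗ₘ κ₂).map Prod.swap) μ (fun k p => p.1 k) (fun k p => p.2 k)) :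
    ∀ᵐ p ∂(l ⊗ₘ (κ₁ ×ₖ κ₂)), p.2.1 = p.2.2 := by
  have e₁ : jointLaw (l ⊗ₘ (κ₁ ×ₖ κ₂)) (fun k p => p.2.1 k) (fun k p => p.1 k)
      = (l ⊗ₘ κ₁).map Prod.swap := by
    conv_rhs => rw [← Kernel.fst_prod κ₁ κ₂, Kernel.fst_eq, Measure.compProd_map measurable_fst]
    rw [Measure.map_map measurable_swap (by fun_prop)]
    rfl
  have e₂ : jointLaw (l ⊗ₘ (κ₁ ×ₖ κ₂)) (fun k p => p.2.2 k) (fun k p => p.1 k)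
      = (l ⊗ₘ κ₂).map Prod.swap := by
    conv_rhs => rw [← Kernel.snd_prod κ₁ κ₂, Kernel.snd_eq, Measure.compProd_map measurable_snd]
    rw [Measure.map_map measurable_swap (by fun_prop)]
    rfl
  rw [← e₁, ← isSolution_iff_law hsm _ _ _ _ (by fun_prop) (by fun_prop)] at h₁
  rw [← e₂, ← isSolution_iff_law hsm _ _ _ _ (by fun_prop) (by fun_prop)] at h₂
  have := ae_all_iff.2 (hpw _ _ _ _ _ _ inferInstance h₁ h₂)
  filter_upwards [this] with p hp
  exact funext hp

theorem disint {Ω S G : Type*} [MeasurableSpace Ω] [MeasurableSpace S] [StandardBorelSpace S]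
    [Nonempty S] [MeasurableSpace G] [SMul G S] {P : Measure Ω} [IsProbabilityMeasure P]
    {μ : ℕ → Measure G} [∀ k, IsProbabilityMeasure (μ k)]
    {X : ℕ → Ω → S} {N : ℕ → Ω → G} (h : IsSolution P μ X N) :
    ∃ κ : Kernel (ℕ → G) (ℕ → S), IsMarkovKernel κ ∧
      jointLaw P X N = (Measure.infinitePi μ ⊗ₘ κ).map Prod.swap := by
  have hX := h.measurable_X
  have hN := h.measurable_N
  let ρ : Measure ((ℕ → G) × (ℕ → S)) := P.map fun ω => (fun k => N k ω, fun k => X k ω)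
  have : IsProbabilityMeasure ρ := Measure.isProbabilityMeasure_map (by fun_prop)
  refine ⟨ρ.condKernel, inferInstance, ?_⟩
  have hf : ρ.fst = Measure.infinitePi μ := by
    rw [← noise_law h]
    exact Measure.map_map measurable_fst (by fun_prop)
  rw [← hf, ρ.disintegrate, Measure.map_map measurable_swap (by fun_prop)]
  rfl

end Helpers

section Tsirelson

variable {S : Type u} {G : Type v}
  [TopologicalSpace S] [CompactSpace S] [TopologicalSpace.MetrizableSpace S]
  [SecondCountableTopology S] [MeasurableSpace S] [BorelSpace S]
  [TopologicalSpace G] [CompactSpace G] [TopologicalSpace.MetrizableSpace G]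
  [SecondCountableTopology G] [MeasurableSpace G] [BorelSpace G]
  [Semigroup G] [ContinuousMul G]
  [SMul G S] [ContinuousSMul G S] [IsScalarTower G G S]

/-- **Yamada–Watanabe, part (ii).** Pathwise uniqueness implies uniqueness in
law and that every solution is strong. -/
theorem tsirelson_uniqueness_in_law_and_strong_of_pathwise_uniqueness
    (μ : ℕ → Measure G) (hμ : ∀ k, IsProbabilityMeasure (μ k))
    (hpw : ∀ (Ω : Type (max u v)) (_ : MeasurableSpace Ω) (P : Measure Ω)
      (X X' : ℕ → Ω → S) (N : ℕ → Ω → G),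
      IsProbabilityMeasure P → IsSolution P μ X N → IsSolution P μ X' N →
      ∀ k, X k =ᵐ[P] X' k) :
    (∀ (Ω₁ : Type (max u v)) (_ : MeasurableSpace Ω₁) (P₁ : Measure Ω₁)
      (X₁ : ℕ → Ω₁ → S) (N₁ : ℕ → Ω₁ → G)
      (Ω₂ : Type (max u v)) (_ : MeasurableSpace Ω₂) (P₂ : Measure Ω₂)
      (X₂ : ℕ → Ω₂ → S) (N₂ : ℕ → Ω₂ → G),
      IsProbabilityMeasure P₁ → IsProbabilityMeasure P₂ →
      IsSolution P₁ μ X₁ N₁ → IsSolution P₂ μ X₂ N₂ →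
      jointLaw P₁ X₁ N₁ = jointLaw P₂ X₂ N₂) ∧
    (∀ (Ω : Type (max u v)) (_ : MeasurableSpace Ω) (P : Measure Ω)
      (X : ℕ → Ω → S) (N : ℕ → Ω → G),
      IsProbabilityMeasure P → IsSolution P μ X N → IsStrong P X N) := by
  letI := TopologicalSpace.metrizableSpaceMetric S
  have hsm : Measurable fun p : G × S => p.1 • p.2 := continuous_smul.measurable
  refine ⟨?_, ?_⟩
  · intro Ω₁ _ P₁ X₁ N₁ Ω₂ _ P₂ X₂ N₂ _ _ h₁ h₂
    have : Nonempty S := ⟨X₁ 0 (nonempty_of_isProbabilityMeasure P₁).some⟩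
    obtain ⟨κ₁, _, e₁⟩ := disint h₁
    obtain ⟨κ₂, _, e₂⟩ := disint h₂
    rw [isSolution_iff_law hsm _ _ _ _ h₁.measurable_X h₁.measurable_N, e₁] at h₁
    rw [isSolution_iff_law hsm _ _ _ _ h₂.measurable_X h₂.measurable_N, e₂] at h₂
    have hd := glue hsm μ hpw _ κ₁ κ₂ h₁ h₂
    rw [e₁, e₂]
    congr 1
    conv_lhs => rw [← Kernel.fst_prod κ₁ κ₂, Kernel.fst_eq, Measure.compProd_map measurable_fst]
    conv_rhs => rw [← Kernel.snd_prod κ₁ κ₂, Kernel.snd_eq, Measure.compProd_map measurable_snd]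
    refine Measure.map_congr ?_
    filter_upwards [hd] with p hp
    exact Prod.ext rfl hp
  · intro Ω _ P X N _ h
    have : Nonempty S := ⟨X 0 (nonempty_of_isProbabilityMeasure P).some⟩
    obtain ⟨κ, _, e⟩ := disint h
    have hs := h
    rw [isSolution_iff_law hsm _ _ _ _ h.measurable_X h.measurable_N, e] at hs
    obtain ⟨F, hF, hFe⟩ := deterministic_of_diag _ κ (glue hsm μ hpw _ κ κ hs hs)
    have hX := h.measurable_X
    have hN := h.measurable_N
    have hm : MeasurableSet {p : (ℕ → S) × (ℕ → G) | p.1 = F p.2} :=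
      measurableSet_eq_fun measurable_fst (hF.comp measurable_snd)
    have h0 : ∀ᵐ p ∂(jointLaw P X N), p.1 = F p.2 := by
      rw [e, ae_map_iff measurable_swap.aemeasurable hm]
      exact hFe
    have h0' : ∀ᵐ ω ∂P, (fun k => X k ω) = F fun k => N k ω :=
      (ae_map_iff (by fun_prop) hm).1 h0
    intro k
    have step : ∀ j ≤ k, ∃ F' : (ℕ → G) → S, Measurable F' ∧
        ∀ᵐ ω ∂P, X k ω = F' fun i => N (j + i) ω := by
      intro j
      induction j with
      | zero =>
        intro _
        refine ⟨fun z => F z k, by fun_prop, ?_⟩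
        filter_upwards [h0'] with ω hω
        simpa using congrFun hω k
      | succ j ih =>
        intro hj
        obtain ⟨F', hF', hE⟩ := ih (by omega)
        exact remove_noise h (by omega) F' hF' hE
    obtain ⟨F', hF', hE⟩ := step k le_rfl
    refine ⟨fun ω => F' fun i => N (k + i) ω, ?_, hE⟩
    refine hF'.comp (@measurable_pi_lambda _ _ _ (past N k) _ _ fun i => ?_)
    exact past_measurable N (by omega)

end Tsirelson
end

section
/- For any two solutions {X⁽¹⁾,N⁽¹⁾} and {X⁽²⁾,N⁽²⁾} of Tsirelson's equation with noise law μ, there exists a triple of processes {X̃⁽¹⁾, X̃⁽²⁾, Ñ} on some probability space (Ω̃,F̃,P̃) such that: (1) (X⁽¹⁾,N⁽¹⁾) and (X̃⁽¹⁾,Ñ) are identical in law, and (X⁽²⁾,N⁽²⁾) and (X̃⁽²⁾,Ñ) are identical in law; (2) for each k ∈ -ℕ, Ñ_k is independent of σ(X̃⁽¹⁾_j, X̃⁽²⁾_j, Ñ_j : j ≤ k-1); (3) X̃⁽¹⁾ and X̃⁽²⁾ are conditionally independent given σ(Ñ). -/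
open MeasureTheory ProbabilityTheory Filter Topology
open scoped NNReal ENNReal

universe u v w w₂

section Helpers

/-- Shift of a sequence by `k`. -/
def shiftSeq {α : Type*} (k : ℕ) (x : ℕ → α) : ℕ → α := fun j => x (j + k)

/-- Glue a finite head of length `k` and a tail. -/
def glueSeq {α : Type*} (k : ℕ) (p : (Fin k → α) × (ℕ → α)) : ℕ → α :=
  fun j => if h : j < k then p.1 ⟨j, h⟩ else p.2 (j - k)

lemma measurable_shiftSeq {α : Type*} [MeasurableSpace α] (k : ℕ) :
    Measurable (shiftSeq (α := α) k) := by
  unfold shiftSeq; fun_prop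

lemma measurable_glueSeq {α : Type*} [MeasurableSpace α] (k : ℕ) :
    Measurable (glueSeq (α := α) k) := by
  unfold glueSeq
  refine measurable_pi_iff.2 fun j => ?_
  by_cases h : j < k
  · simp only [h, dif_pos]; fun_prop
  · simp only [h, dif_neg, not_false_eq_true]; fun_prop

lemma shift_glue {α : Type*} (k : ℕ) (p : (Fin k → α) × (ℕ → α)) :
    shiftSeq k (glueSeq k p) = p.2 := by
  funext j; simp [shiftSeq, glueSeq]

lemma shift_shift {α : Type*} (k : ℕ) (x : ℕ → α) :
    shiftSeq 1 (shiftSeq k x) = shiftSeq (k + 1) x := by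
  funext j
  simp only [shiftSeq]
  congr 1
  omega

lemma glue_shift {α : Type*} (k : ℕ) (x : ℕ → α) :
    glueSeq k (fun i => x i, shiftSeq k x) = x := by
  funext j
  by_cases h : j < k
  · simp [glueSeq, h]
  · simp [glueSeq, shiftSeq, h, Nat.sub_add_cancel (not_lt.1 h)]

lemma past_eq {Ω α : Type*} [MeasurableSpace α] (Y : ℕ → Ω → α) (k : ℕ) :
    past Y k = MeasurableSpace.comap (fun ω => shiftSeq k (fun j => Y j ω)) inferInstance := by
  unfold past
  simp only [MeasurableSpace.pi, MeasurableSpace.comap_iSup, MeasurableSpace.comap_comp]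
  apply le_antisymm
  · refine iSup₂_le fun j hj => ?_
    refine le_iSup_of_le (j - k) (le_of_eq ?_)
    congr 1
    funext ω
    simp [shiftSeq, Nat.sub_add_cancel hj]
  · refine iSup_le fun j => ?_
    exact le_iSup₂_of_le (j + k) (by simp) le_rfl

lemma indepFun_assoc {Ω A B C : Type*} [MeasurableSpace Ω] [MeasurableSpace A]
    [MeasurableSpace B] [MeasurableSpace C] {P : Measure Ω} [IsProbabilityMeasure P]
    {a : Ω → A} {b : Ω → B} {c : Ω → C}
    (ha : Measurable a) (hb : Measurable b) (hc : Measurable c)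
    (h1 : IndepFun a (fun ω => (b ω, c ω)) P) (h2 : IndepFun b c P) :
    IndepFun (fun ω => (a ω, b ω)) c P := by
  have hab : IndepFun a b P := h1.comp measurable_id measurable_fst
  rw [indepFun_iff_map_prod_eq_prod_map_map ha.aemeasurable (by fun_prop)] at h1
  rw [indepFun_iff_map_prod_eq_prod_map_map hb.aemeasurable (by fun_prop)] at h2
  rw [indepFun_iff_map_prod_eq_prod_map_map ha.aemeasurable (by fun_prop)] at hab
  rw [indepFun_iff_map_prod_eq_prod_map_map (by fun_prop) (by fun_prop)]
  have := Measure.isProbabilityMeasure_map (μ := P) ha.aemeasurable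
  have := Measure.isProbabilityMeasure_map (μ := P) hb.aemeasurable
  have := Measure.isProbabilityMeasure_map (μ := P) hc.aemeasurable
  rw [h2] at h1
  rw [hab]
  apply (MeasurableEquiv.prodAssoc (α := A) (β := B) (γ := C)).map_measurableEquiv_injective
  rw [Measure.prodAssoc_prod, ← h1, Measure.map_map (by fun_prop) (by fun_prop)]
  rfl

lemma IsSolution.indep_head {Ω S G : Type*} [MeasurableSpace Ω] [MeasurableSpace S]
    [MeasurableSpace G] [SMul G S] {P : Measure Ω} [IsProbabilityMeasure P] {μ : ℕ → Measure G}
    {X : ℕ → Ω → S} {N : ℕ → Ω → G} (h : IsSolution P μ X N) (k : ℕ) :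
    IndepFun (fun ω => (fun i : Fin k => N i ω))
      (fun ω => (shiftSeq k (fun j => N j ω), shiftSeq k (fun j => X j ω))) P := by
  have hX := h.measurable_X
  have hN := h.measurable_N
  have hTX : ∀ k, Measurable fun ω => shiftSeq k (fun j => X j ω) := fun k =>
    (measurable_shiftSeq k).comp (measurable_pi_iff.2 hX)
  have hTN : ∀ k, Measurable fun ω => shiftSeq k (fun j => N j ω) := fun k =>
    (measurable_shiftSeq k).comp (measurable_pi_iff.2 hN)
  induction k with
  | zero =>
    have : (fun ω => (fun i : Fin 0 => N i ω)) = fun _ => (fun i : Fin 0 => i.elim0) := by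
      funext ω i; exact i.elim0
    rw [this]
    exact indepFun_const_left _ _
  | succ k ih =>
    have h2 : IndepFun (N k) (fun ω => (shiftSeq (k+1) (fun j => N j ω),
        shiftSeq (k+1) (fun j => X j ω))) P := by
      have := h.indep k
      rw [past_eq, past_eq, sup_comm] at this
      rw [IndepFun_iff_Indep]
      convert this using 1
      exact MeasurableSpace.comap_prodMk _ _
    have h1 : IndepFun (fun ω => (fun i : Fin k => N i ω)) (fun ω => (N k ω,
        (shiftSeq (k+1) (fun j => N j ω), shiftSeq (k+1) (fun j => X j ω)))) P := by
      have := ih.comp (φ := id) (ψ := fun p : (ℕ → G) × (ℕ → S) =>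
        (p.1 0, (shiftSeq 1 p.1, shiftSeq 1 p.2))) measurable_id
        (by have := measurable_shiftSeq (α := S) 1
            have := measurable_shiftSeq (α := G) 1
            fun_prop)
      convert this using 1
      · rfl
      funext ω
      simp only [Function.comp, shift_shift]
      simp [shiftSeq]
    have h3 := indepFun_assoc (by fun_prop) (hN k) ((hTN _).prodMk (hTX _)) h1 h2
    have := h3.comp (φ := fun p : (Fin k → G) × G => (Fin.snoc p.1 p.2 : Fin (k+1) → G))
      (ψ := id) (by
        refine measurable_pi_iff.2 fun i => ?_
        refine Fin.lastCases ?_ (fun i => ?_) i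
        · simp; fun_prop
        · simp; fun_prop) measurable_id
    convert this using 1
    swap
    · rfl
    funext ω i
    refine Fin.lastCases ?_ (fun i => ?_) i <;> simp

lemma IsSolution.law_eq {Ω S G : Type*} [MeasurableSpace Ω] [MeasurableSpace S]
    [MeasurableSpace G] [SMul G S] {P : Measure Ω} [IsProbabilityMeasure P] {μ : ℕ → Measure G}
    [∀ k, IsProbabilityMeasure (μ k)]
    {X : ℕ → Ω → S} {N : ℕ → Ω → G} (h : IsSolution P μ X N) :
    P.map (fun ω j => N j ω) = Measure.infinitePi μ := by
  have hN := h.measurable_N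
  have key : ∀ (t : ℕ → Set G), (∀ i, MeasurableSet (t i)) → ∀ n,
      P {ω | ∀ i < n, N i ω ∈ t i} = ∏ i ∈ Finset.range n, μ i (t i) := by
    intro t ht n
    induction n with
    | zero => simp
    | succ n ih =>
      have h1 := (h.indep_head n).measure_inter_preimage_eq_mul
        {f | ∀ i : Fin n, f i ∈ t i} {p | p.1 0 ∈ t n}
        (by
          have : {f : Fin n → G | ∀ i : Fin n, f i ∈ t i} = Set.univ.pi (fun i : Fin n => t i) := by
            ext; simp
          rw [this]
          exact MeasurableSet.univ_pi fun i => ht i)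
        ((by fun_prop : Measurable fun p : (ℕ → G) × (ℕ → S) => p.1 0) (ht n))
      rw [Finset.prod_range_succ, ← ih, ← h.law_N n, Measure.map_apply (hN n) (ht n)]
      convert h1 using 2
      · ext ω
        simp only [Set.mem_ofPred_eq, Set.mem_inter_iff, Set.mem_preimage, shiftSeq, zero_add]
        constructor
        · exact fun h => ⟨fun i => h i (by omega), h n (by omega)⟩
        · rintro ⟨h1, h2⟩ i hi
          rcases Nat.lt_succ_iff_lt_or_eq.1 hi with h | rfl
          · exact h1 ⟨i, h⟩
          · exact h2
      · congr 1
        ext ω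
        simp only [Set.mem_ofPred_eq, Set.mem_preimage]
        exact ⟨fun h i => h i i.2, fun h i hi => h ⟨i, hi⟩⟩
      · simp [shiftSeq, Set.preimage]
  refine Measure.eq_infinitePi _ fun s t ht => ?_
  classical
  have hk := key (fun i => if i ∈ s then t i else Set.univ) (fun i => by
    by_cases hi : i ∈ s <;> simp [hi, ht]) (s.sup id + 1)
  rw [Measure.map_apply (measurable_pi_iff.2 hN) (by
    exact MeasurableSet.pi s.countable_toSet (fun i _ => ht i))]
  have hs : s ⊆ Finset.range (s.sup id + 1) := fun i hi => by
    simpa [Nat.lt_succ_iff] using Finset.le_sup (f := id) hi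
  convert hk using 1
  · congr 1
    ext ω
    simp only [Set.mem_preimage, Set.mem_pi, Set.mem_ofPred_eq, Finset.mem_coe]
    constructor
    · intro h i _
      by_cases hi : i ∈ s <;> simp [hi, h]
    · intro h i hi
      simpa [hi] using h i (by simpa using hs hi)
  · rw [← Finset.prod_subset hs]
    · exact Finset.prod_congr rfl fun i hi => by simp [hi]
    · intro i _ hi
      simp [hi]

end Helpers

section Helpers2

lemma polish_of_compact (S : Type*) [TopologicalSpace S] [CompactSpace S]
    [TopologicalSpace.MetrizableSpace S] [SecondCountableTopology S] : PolishSpace S := by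
  let := TopologicalSpace.metrizableSpaceMetric S
  infer_instance

/-- The conditional law of the tail of `X` given the whole noise depends only on the tail
of the noise. -/
lemma IsSolution.cond_tail {Ω S G : Type*} [MeasurableSpace Ω] [MeasurableSpace S]
    [StandardBorelSpace S] [Nonempty S]
    [MeasurableSpace G] [SMul G S] {P : Measure Ω} [IsProbabilityMeasure P] {μ : ℕ → Measure G}
    {X : ℕ → Ω → S} {N : ℕ → Ω → G} (h : IsSolution P μ X N) (k : ℕ) :
    ∃ η : Kernel (ℕ → G) (ℕ → S), IsMarkovKernel η ∧
      ∀ᵐ n ∂(P.map (fun ω j => N j ω)),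
        (condDistrib (fun ω j => X j ω) (fun ω j => N j ω) P n).map (shiftSeq k)
          = η (shiftSeq k n) := by
  have hX : Measurable (fun ω j => X j ω) := measurable_pi_iff.2 h.measurable_X
  have hN : Measurable (fun ω j => N j ω) := measurable_pi_iff.2 h.measurable_N
  have hTX : Measurable fun ω => shiftSeq k (fun j => X j ω) := (measurable_shiftSeq k).comp hX
  have hTN : Measurable fun ω => shiftSeq k (fun j => N j ω) := (measurable_shiftSeq k).comp hN
  have hH : Measurable fun ω => (fun i : Fin k => N i ω) :=
    measurable_pi_iff.2 fun i => h.measurable_N i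
  have := Measure.isProbabilityMeasure_map (μ := P) hH.aemeasurable
  have := Measure.isProbabilityMeasure_map (μ := P) hTN.aemeasurable
  set η := condDistrib (fun ω => shiftSeq k (fun j => X j ω))
    (fun ω => shiftSeq k (fun j => N j ω)) P with hη
  refine ⟨η, inferInstance, ?_⟩
  have h1 := condDistrib_comp (mβ := MeasurableSpace.pi) (fun ω j => N j ω) hX.aemeasurable (μ := P)
    (measurable_shiftSeq (α := S) k)
  have h2 : condDistrib (shiftSeq k ∘ (fun ω j => X j ω)) (fun ω j => N j ω) P
      =ᵐ[P.map (fun ω j => N j ω)] η.comap (shiftSeq k) (measurable_shiftSeq k) := by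
    refine condDistrib_ae_eq_of_measure_eq_compProd _ hTX.aemeasurable ?_
    have hlaw := (indepFun_iff_map_prod_eq_prod_map_map hH.aemeasurable
      (hTN.prodMk hTX).aemeasurable).1 (h.indep_head k)
    rw [← compProd_map_condDistrib hTX.aemeasurable] at hlaw
    have hlaw2 := (indepFun_iff_map_prod_eq_prod_map_map hH.aemeasurable
      hTN.aemeasurable).1 ((h.indep_head k).comp measurable_id measurable_fst)
    have hg := measurable_glueSeq (α := G) k
    have hNlaw : P.map (fun ω j => N j ω) = ((P.map fun ω => (fun i : Fin k => N i ω)).prod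
        (P.map fun ω => shiftSeq k (fun j => N j ω))).map (glueSeq k) := by
      rw [← hlaw2, Measure.map_map hg (hH.prodMk hTN)]
      congr 1
      funext ω
      exact (glue_shift k _).symm
    have hNX : P.map (fun ω => ((fun j => N j ω), (shiftSeq k ∘ (fun ω j => X j ω)) ω)) =
        ((P.map fun ω => (fun i : Fin k => N i ω)).prod
          ((P.map fun ω => shiftSeq k (fun j => N j ω)) ⊗ₘ η)).map
          (fun p => (glueSeq k (p.1, p.2.1), p.2.2)) := by
      rw [← hlaw, Measure.map_map (by fun_prop) (hH.prodMk (hTN.prodMk hTX))]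
      congr 1
      funext ω
      simp only [Function.comp]
      congr 1
      exact (glue_shift k _).symm
    refine hNX.trans ?_
    rw [hNlaw]
    ext E hE
    have hm : Measurable (fun p : (Fin k → G) × ((ℕ → G) × (ℕ → S)) =>
      (glueSeq k (p.1, p.2.1), p.2.2)) := by fun_prop
    rw [Measure.map_apply hm hE, Measure.prod_apply (hm hE), Measure.compProd_apply hE,
      lintegral_map (Kernel.measurable_kernel_prodMk_left hE) hg]
    refine Eq.trans ?_ (lintegral_prod _
      ((Kernel.measurable_kernel_prodMk_left hE).comp hg).aemeasurable).symm
    refine lintegral_congr fun a => ?_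
    rw [Measure.compProd_apply (measurable_prodMk_left (hm hE))]
    refine lintegral_congr fun b => ?_
    simp only [Function.comp, Kernel.comap_apply, shift_glue]
    rfl
  filter_upwards [h1, h2] with n hn1 hn2
  rw [← Kernel.map_apply _ (measurable_shiftSeq k), ← hn1, hn2, Kernel.comap_apply]

end Helpers2

section Helpers3

/-- If the kernel on tails factors through the tail of the noise, independence extends. -/
lemma indep_of_tail_kernel {G V W : Type*} [MeasurableSpace G] [MeasurableSpace V]
    [MeasurableSpace W] (ν : Measure (ℕ → G)) [IsProbabilityMeasure ν]
    (K : Kernel (ℕ → G) V) [IsMarkovKernel K] (η : Kernel (ℕ → G) W) [IsMarkovKernel η]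
    (T : V → W) (hT : Measurable T) (k : ℕ)
    (hK : ∀ᵐ n ∂ν, (K n).map T = η (shiftSeq (k + 1) n))
    (hν : IndepFun (fun n : ℕ → G => n k) (shiftSeq (k + 1)) ν) :
    IndepFun (fun p : (ℕ → G) × V => p.1 k)
      (fun p : (ℕ → G) × V => (shiftSeq (k + 1) p.1, T p.2)) (ν ⊗ₘ K) := by
  have hs := measurable_shiftSeq (α := G) (k + 1)
  have hf : Measurable (fun p : (ℕ → G) × V => p.1 k) := by fun_prop
  have hg : Measurable (fun p : (ℕ → G) × V => (shiftSeq (k + 1) p.1, T p.2)) := by fun_prop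
  have key : ∀ D E, MeasurableSet D → MeasurableSet E →
      (ν ⊗ₘ K) ((fun p : (ℕ → G) × V => p.1 k) ⁻¹' D ∩
        (fun p : (ℕ → G) × V => (shiftSeq (k + 1) p.1, T p.2)) ⁻¹' E) =
      (∫⁻ n, D.indicator (fun _ => (1 : ℝ≥0∞)) (n k) ∂ν) *
        ∫⁻ n, η (shiftSeq (k + 1) n) (Prod.mk (shiftSeq (k + 1) n) ⁻¹' E) ∂ν := by
    intro D E hD hE
    have hh : Measurable fun t => η t (Prod.mk t ⁻¹' E) := Kernel.measurable_kernel_prodMk_left hE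
    have hd : Measurable (D.indicator (fun _ => (1 : ℝ≥0∞))) := measurable_const.indicator hD
    have := lintegral_mul_eq_lintegral_mul_lintegral_of_indepFun
      (hd.comp (measurable_pi_apply k)) (hh.comp hs) (hν.comp hd hh)
    simp only [Pi.mul_apply, Function.comp] at this
    rw [← this, Measure.compProd_apply ((hf hD).inter (hg hE))]
    refine lintegral_congr_ae ?_
    filter_upwards [hK] with n hn
    rw [← hn, Measure.map_apply hT (measurable_prodMk_left hE)]
    by_cases hnk : n k ∈ D
    · simp only [hnk, Set.indicator_of_mem, one_mul]
      congr 1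
      ext y
      simp [hnk]
    · rw [Set.indicator_of_notMem hnk, zero_mul]
      convert measure_empty (μ := K n)
      ext y
      simp [hnk]
  rw [indepFun_iff_measure_inter_preimage_eq_mul]
  intro D E hD hE
  have h1 := key D Set.univ hD MeasurableSet.univ
  have h2 := key Set.univ E MeasurableSet.univ hE
  simp only [Set.preimage_univ, Set.inter_univ, measure_univ, lintegral_const, mul_one,
    Set.univ_inter, Set.indicator_univ, one_mul] at h1 h2
  rw [key D E hD hE, h1, h2]

end Helpers3

section Tsirelson

variable {S : Type u} {G : Type v}
  [TopologicalSpace S] [CompactSpace S] [TopologicalSpace.MetrizableSpace S]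
  [SecondCountableTopology S] [MeasurableSpace S] [BorelSpace S]
  [TopologicalSpace G] [CompactSpace G] [TopologicalSpace.MetrizableSpace G]
  [SecondCountableTopology G] [MeasurableSpace G] [BorelSpace G]
  [Semigroup G] [ContinuousMul G]
  [SMul G S] [ContinuousSMul G S] [IsScalarTower G G S]

/-- Any two solutions admit a conditionally independent coupling:
a triple `(X̃¹, X̃², Ñ)` such that `(X̃ⁱ, Ñ)` has the law of the `i`-th solution, each `Ñ_k`
is independent of the past of `(X̃¹, X̃², Ñ)`, and `X̃¹, X̃²` are conditionally independent
given `σ(Ñ)` (expressed via conditional expectations of indicators). -/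
theorem tsirelson_conditionally_independent_coupling
    (μ : ℕ → Measure G) (hμ : ∀ k, IsProbabilityMeasure (μ k))
    {Ω₁ : Type w} [MeasurableSpace Ω₁] (P₁ : Measure Ω₁) [IsProbabilityMeasure P₁]
    (X₁ : ℕ → Ω₁ → S) (N₁ : ℕ → Ω₁ → G) (hsol₁ : IsSolution P₁ μ X₁ N₁)
    {Ω₂ : Type w₂} [MeasurableSpace Ω₂] (P₂ : Measure Ω₂) [IsProbabilityMeasure P₂]
    (X₂ : ℕ → Ω₂ → S) (N₂ : ℕ → Ω₂ → G) (hsol₂ : IsSolution P₂ μ X₂ N₂) :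
    ∃ (Ω : Type (max u v)) (_ : MeasurableSpace Ω) (P : Measure Ω)
      (Y₁ Y₂ : ℕ → Ω → S) (M : ℕ → Ω → G),
      IsProbabilityMeasure P ∧
      (∀ k, Measurable (Y₁ k)) ∧ (∀ k, Measurable (Y₂ k)) ∧ (∀ k, Measurable (M k)) ∧
      -- (1) the couplings have the right laws
      jointLaw P Y₁ M = jointLaw P₁ X₁ N₁ ∧
      jointLaw P Y₂ M = jointLaw P₂ X₂ N₂ ∧
      -- (2) each `M k` is independent of the past of `(Y₁, Y₂, M)`
      (∀ k, Indep (MeasurableSpace.comap (M k) inferInstance)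
        (past Y₁ (k + 1) ⊔ past Y₂ (k + 1) ⊔ past M (k + 1)) P) ∧
      -- (3) `Y₁` and `Y₂` are conditionally independent given `σ(M)`
      (∀ A B : Set Ω, MeasurableSet[past Y₁ 0] A → MeasurableSet[past Y₂ 0] B →
        P[(A ∩ B).indicator (fun _ => (1 : ℝ)) | past M 0] =ᵐ[P]
          fun ω => (P[A.indicator (fun _ => (1 : ℝ)) | past M 0]) ω *
            (P[B.indicator (fun _ => (1 : ℝ)) | past M 0]) ω) := by
  have := hμ
  obtain ⟨ω₀⟩ : Nonempty Ω₁ := nonempty_of_isProbabilityMeasure P₁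
  have : Nonempty S := ⟨X₁ 0 ω₀⟩
  have : PolishSpace S := polish_of_compact S
  have : PolishSpace G := polish_of_compact G
  have hX₁ : Measurable (fun ω j => X₁ j ω) := measurable_pi_iff.2 hsol₁.measurable_X
  have hN₁ : Measurable (fun ω j => N₁ j ω) := measurable_pi_iff.2 hsol₁.measurable_N
  have hX₂ : Measurable (fun ω j => X₂ j ω) := measurable_pi_iff.2 hsol₂.measurable_X
  have hN₂ : Measurable (fun ω j => N₂ j ω) := measurable_pi_iff.2 hsol₂.measurable_N
  have hl₁ := hsol₁.law_eq
  have hl₂ := hsol₂.law_eq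
  obtain ⟨ν, hν⟩ : ∃ ν : Measure (ℕ → G), ν = Measure.infinitePi μ := ⟨_, rfl⟩
  have hνp : IsProbabilityMeasure ν := by rw [hν]; infer_instance
  rw [← hν] at hl₁ hl₂
  set κ₁ := condDistrib (fun ω j => X₁ j ω) (fun ω j => N₁ j ω) P₁ with hκ₁
  set κ₂ := condDistrib (fun ω j => X₂ j ω) (fun ω j => N₂ j ω) P₂ with hκ₂
  have hc₁ : ν ⊗ₘ κ₁ = P₁.map fun ω => ((fun j => N₁ j ω), (fun j => X₁ j ω)) := by
    rw [← hl₁]; exact compProd_map_condDistrib hX₁.aemeasurable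
  have hc₂ : ν ⊗ₘ κ₂ = P₂.map fun ω => ((fun j => N₂ j ω), (fun j => X₂ j ω)) := by
    rw [← hl₂]; exact compProd_map_condDistrib hX₂.aemeasurable
  obtain ⟨P, hP⟩ : ∃ P : Measure ((ℕ → G) × ((ℕ → S) × (ℕ → S))), P = ν ⊗ₘ (κ₁ ×ₖ κ₂) :=
    ⟨_, rfl⟩
  have hPp : IsProbabilityMeasure P := by rw [hP]; infer_instance
  have hm₁ : P.map (fun p => (p.1, p.2.1)) = ν ⊗ₘ κ₁ := by
    ext E hE
    have hm : Measurable fun p : (ℕ → G) × ((ℕ → S) × (ℕ → S)) => (p.1, p.2.1) := by fun_prop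
    rw [Measure.map_apply hm hE, hP, Measure.compProd_apply (hm hE), Measure.compProd_apply hE]
    refine lintegral_congr fun n => ?_
    have : Prod.mk n ⁻¹' ((fun p : (ℕ → G) × ((ℕ → S) × (ℕ → S)) => (p.1, p.2.1)) ⁻¹' E)
        = (Prod.mk n ⁻¹' E) ×ˢ Set.univ := by ext; simp
    rw [this, Kernel.prod_apply_prod, measure_univ, mul_one]
  have hm₂ : P.map (fun p => (p.1, p.2.2)) = ν ⊗ₘ κ₂ := by
    ext E hE
    have hm : Measurable fun p : (ℕ → G) × ((ℕ → S) × (ℕ → S)) => (p.1, p.2.2) := by fun_prop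
    rw [Measure.map_apply hm hE, hP, Measure.compProd_apply (hm hE), Measure.compProd_apply hE]
    refine lintegral_congr fun n => ?_
    have : Prod.mk n ⁻¹' ((fun p : (ℕ → G) × ((ℕ → S) × (ℕ → S)) => (p.1, p.2.2)) ⁻¹' E)
        = Set.univ ×ˢ (Prod.mk n ⁻¹' E) := by ext; simp
    rw [this, Kernel.prod_apply_prod, measure_univ, one_mul]
  have hPf : P.map Prod.fst = ν := by rw [hP]; exact Measure.fst_compProd _ _
  refine ⟨(ℕ → G) × ((ℕ → S) × (ℕ → S)), inferInstance, P, fun k p => p.2.1 k,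
    fun k p => p.2.2 k, fun k p => p.1 k, inferInstance, by fun_prop, by fun_prop, by fun_prop,
    ?_, ?_, ?_, ?_⟩
  · have : jointLaw P (fun k p => p.2.1 k) (fun k p => p.1 k) =
        (P.map (fun p => (p.1, p.2.1))).map Prod.swap := by
      rw [Measure.map_map (by fun_prop) (by fun_prop)]; rfl
    rw [this, hm₁, hc₁, Measure.map_map (by fun_prop) (hN₁.prodMk hX₁)]; rfl
  · have : jointLaw P (fun k p => p.2.2 k) (fun k p => p.1 k) =
        (P.map (fun p => (p.1, p.2.2))).map Prod.swap := by
      rw [Measure.map_map (by fun_prop) (by fun_prop)]; rfl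
    rw [this, hm₂, hc₂, Measure.map_map (by fun_prop) (hN₂.prodMk hX₂)]; rfl
  · intro k
    obtain ⟨η₁, hη₁, hk₁⟩ := hsol₁.cond_tail (k + 1)
    obtain ⟨η₂, hη₂, hk₂⟩ := hsol₂.cond_tail (k + 1)
    rw [hl₁] at hk₁
    rw [hl₂] at hk₂
    have hs := measurable_shiftSeq (α := S) (k + 1)
    have hsG := measurable_shiftSeq (α := G) (k + 1)
    have hind : IndepFun (fun n : ℕ → G => n k) (shiftSeq (k + 1)) ν := by
      have h1 : IndepFun (N₁ k) (fun ω => shiftSeq (k + 1) (fun j => N₁ j ω)) P₁ := by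
        have := (hsol₁.indep_head (k + 1)).comp (measurable_pi_apply (Fin.last k)) measurable_fst
        exact this
      replace h1 := (indepFun_iff_map_prod_eq_prod_map_map (hsol₁.measurable_N k).aemeasurable
        (hsG.comp hN₁).aemeasurable).1 h1
      rw [indepFun_iff_map_prod_eq_prod_map_map (measurable_pi_apply k).aemeasurable
        hsG.aemeasurable]
      rw [← hl₁, Measure.map_map (by fun_prop) hN₁, Measure.map_map (by fun_prop) hN₁,
        Measure.map_map (by fun_prop) hN₁]
      exact h1
    have h := indep_of_tail_kernel ν (κ₁ ×ₖ κ₂) (η₁ ×ₖ η₂)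
      (Prod.map (shiftSeq (k + 1)) (shiftSeq (k + 1))) (hs.prodMap hs) k (by
        filter_upwards [hk₁, hk₂] with n h1 h2
        rw [Kernel.prod_apply, Kernel.prod_apply, ← h1, ← h2, Measure.map_prod_map _ _ hs hs]) hind
    rw [← hP, IndepFun_iff_Indep] at h
    rw [past_eq, past_eq, past_eq]
    refine indep_of_indep_of_le_right h ?_
    refine sup_le (sup_le ?_ ?_) ?_
    · rintro _ ⟨A, hA, rfl⟩
      exact ⟨Prod.snd ⁻¹' (Prod.fst ⁻¹' A), measurable_snd (measurable_fst hA), rfl⟩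
    · rintro _ ⟨A, hA, rfl⟩
      exact ⟨Prod.snd ⁻¹' (Prod.snd ⁻¹' A), measurable_snd (measurable_snd hA), rfl⟩
    · rintro _ ⟨A, hA, rfl⟩
      exact ⟨Prod.fst ⁻¹' A, measurable_fst hA, rfl⟩
  · have hd₁ : condDistrib (fun p : (ℕ → G) × ((ℕ → S) × (ℕ → S)) => p.2.1) Prod.fst P
        =ᵐ[ν] κ₁ := by
      rw [← hPf]
      refine condDistrib_ae_eq_of_measure_eq_compProd _ (by fun_prop) ?_
      rw [hPf, ← hm₁]
    have hd₂ : condDistrib (fun p : (ℕ → G) × ((ℕ → S) × (ℕ → S)) => p.2.2) Prod.fst P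
        =ᵐ[ν] κ₂ := by
      rw [← hPf]
      refine condDistrib_ae_eq_of_measure_eq_compProd _ (by fun_prop) ?_
      rw [hPf, ← hm₂]
    have hci : CondIndepFun (MeasurableSpace.comap Prod.fst inferInstance)
        measurable_fst.comap_le
        (fun p : (ℕ → G) × ((ℕ → S) × (ℕ → S)) => p.2.1) (fun p => p.2.2) P := by
      rw [condIndepFun_iff_map_prod_eq_prod_condDistrib_prod_condDistrib (by fun_prop)
        (by fun_prop) measurable_fst, hPf, ← Measure.compProd_eq_comp_prod]
      have : ν ⊗ₘ (condDistrib (fun p : (ℕ → G) × ((ℕ → S) × (ℕ → S)) => p.2.1) Prod.fst P ×ₖ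
          condDistrib (fun p : (ℕ → G) × ((ℕ → S) × (ℕ → S)) => p.2.2) Prod.fst P) = P := by
        refine Eq.trans (Measure.compProd_congr ?_) hP.symm
        filter_upwards [hd₁, hd₂] with n h1 h2
        rw [Kernel.prod_apply, Kernel.prod_apply, h1, h2]
      rw [this]
      exact Measure.map_id
    rw [condIndepFun_iff _ _ _ _ (by fun_prop) (by fun_prop)] at hci
    intro A B hA hB
    rw [past_eq] at hA hB
    rw [past_eq]
    exact hci A B hA hB

end Tsirelson
end

section
/- Suppose that for each k ∈ -ℕ there exists a Borel probability measure ν_k on Σ such that the convolution μ_k * μ_{k-1} * ⋯ * μ_{l+1} converges weakly to ν_k as l → -∞. Then every extreme point (λ_k)_{k∈-ℕ} of the convex set P^cvl_μ of solutions of the convolution equation λ_k = μ_k * λ_{k-1} (k ∈ -ℕ) can be represented as λ_k = ν_k * δ_x for all k ∈ -ℕ, for some x ∈ S. -/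
open MeasureTheory ProbabilityTheory Filter Topology
open scoped NNReal ENNReal

universe u v w w₂

section Tsirelson

variable {S : Type u} {G : Type v}
  [TopologicalSpace S] [CompactSpace S] [TopologicalSpace.MetrizableSpace S]
  [SecondCountableTopology S] [MeasurableSpace S] [BorelSpace S]
  [TopologicalSpace G] [CompactSpace G] [TopologicalSpace.MetrizableSpace G]
  [SecondCountableTopology G] [MeasurableSpace G] [BorelSpace G]
  [Semigroup G] [ContinuousMul G]
  [SMul G S] [ContinuousSMul G S] [IsScalarTower G G S]

set_option linter.unusedSectionVars false

/-- Bundle a probability measure. -/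
abbrev auxPM {X : Type*} [MeasurableSpace X] (m : Measure X) (h : IsProbabilityMeasure m) :
    ProbabilityMeasure X := ⟨m, h⟩

lemma aux_measurable_smul : Measurable (fun p : G × S => p.1 • p.2) :=
  continuous_smul.measurable

lemma aux_conv_prob (a : Measure G) (m : Measure S) [IsProbabilityMeasure a]
    [IsProbabilityMeasure m] : IsProbabilityMeasure (conv a m) :=
  Measure.isProbabilityMeasure_map continuous_smul.measurable.aemeasurable

lemma aux_convG_prob (a b : Measure G) [IsProbabilityMeasure a]
    [IsProbabilityMeasure b] : IsProbabilityMeasure (convG a b) :=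
  Measure.isProbabilityMeasure_map continuous_mul.measurable.aemeasurable

lemma aux_convIter_prob (μ : ℕ → Measure G) (hμ : ∀ k, IsProbabilityMeasure (μ k)) (n j : ℕ) :
    IsProbabilityMeasure (convIter μ n j) := by
  induction j with
  | zero => exact hμ n
  | succ j ih =>
    have := hμ (n + j + 1)
    exact aux_convG_prob _ _

lemma aux_integrable {X : Type*} [TopologicalSpace X] [CompactSpace X] [MeasurableSpace X]
    [BorelSpace X] (f : X → ℝ) (hf : Continuous f) (m : Measure X) [IsFiniteMeasure m] :
    Integrable f m :=
  (BoundedContinuousFunction.mkOfCompact ⟨f, hf⟩).integrable m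

lemma aux_integral_conv (a : Measure G) (m : Measure S) [IsFiniteMeasure a]
    [IsFiniteMeasure m] (f : S → ℝ) (hf : Continuous f) :
    ∫ s, f s ∂(conv a m) = ∫ y, ∫ σ, f (σ • y) ∂a ∂m := by
  unfold conv
  rw [integral_map continuous_smul.measurable.aemeasurable hf.aestronglyMeasurable,
    integral_prod_symm]
  exact aux_integrable _ (hf.comp continuous_smul) _

lemma aux_integral_conv' (a : Measure G) (m : Measure S)
    (f : S → ℝ) (hf : Continuous f) :
    ∫ s, f s ∂(conv a m) = ∫ p, f (p.1 • p.2) ∂(a.prod m) := by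
  unfold conv
  rw [integral_map continuous_smul.measurable.aemeasurable hf.aestronglyMeasurable]

lemma aux_conv_assoc (a b : Measure G) (m : Measure S) [IsProbabilityMeasure a]
    [IsProbabilityMeasure b] [IsProbabilityMeasure m] :
    conv (convG a b) m = conv a (conv b m) := by
  have h1 : Measurable (fun p : G × S => p.1 • p.2) := continuous_smul.measurable
  have h2 : Measurable (fun p : G × G => p.1 * p.2) := continuous_mul.measurable
  have e1 : (convG a b).prod m
      = ((a.prod b).prod m).map (Prod.map (fun p : G × G => p.1 * p.2) id) := by
    rw [← Measure.map_prod_map _ _ h2 measurable_id, Measure.map_id]; rfl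
  have e2 : a.prod (conv b m)
      = (a.prod (b.prod m)).map (Prod.map id (fun p : G × S => p.1 • p.2)) := by
    rw [← Measure.map_prod_map _ _ measurable_id h1, Measure.map_id]; rfl
  have e3 : a.prod (b.prod m) = ((a.prod b).prod m).map MeasurableEquiv.prodAssoc :=
    (Measure.prodAssoc_prod).symm
  rw [conv, e1, conv, e2, e3, Measure.map_map h1 (h2.prodMap measurable_id),
    Measure.map_map (measurable_id.prodMap h1) (MeasurableEquiv.measurable _),
    Measure.map_map h1 ((measurable_id.prodMap h1).comp (MeasurableEquiv.measurable _))]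
  congr 1
  funext p
  exact smul_assoc p.1.1 p.1.2 p.2

lemma aux_convIter_succ (μ : ℕ → Measure G) (hμ : ∀ k, IsProbabilityMeasure (μ k)) (n j : ℕ) :
    convIter μ n (j + 1) = convG (μ n) (convIter μ (n + 1) j) := by
  induction j with
  | zero => rfl
  | succ j ih =>
    have := hμ n
    have := aux_convIter_prob μ hμ (n + 1) j
    have := hμ (n + (j + 1) + 1)
    have e : n + (j + 1) + 1 = n + 1 + j + 1 := by omega
    rw [convIter, ih]
    change convG _ _ = convG _ (convG _ _)
    rw [← e]
    exact aux_conv_assoc (S := G) _ _ _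

lemma aux_lam_iter (μ : ℕ → Measure G) (hμ : ∀ k, IsProbabilityMeasure (μ k))
    (lam : ℕ → Measure S) (hlam : ∀ k, IsProbabilityMeasure (lam k))
    (hcvl : ∀ k, lam k = conv (μ k) (lam (k + 1))) (n j : ℕ) :
    lam n = conv (convIter μ n j) (lam (n + j + 1)) := by
  induction j with
  | zero => exact hcvl n
  | succ j ih =>
    have := aux_convIter_prob μ hμ n j
    have := hμ (n + j + 1)
    have := hlam (n + (j + 1) + 1)
    rw [convIter, aux_conv_assoc]
    rw [ih]
    congr 1
    exact hcvl _

lemma aux_tendsto {ι : Type*} {F : Filter ι} (a : ι → ProbabilityMeasure G)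
    (m : ι → ProbabilityMeasure S) (a' : ProbabilityMeasure G) (m' : ProbabilityMeasure S)
    (ha : Tendsto a F (𝓝 a')) (hm : Tendsto m F (𝓝 m')) (f : S → ℝ) (hf : Continuous f) :
    Tendsto (fun i => ∫ s, f s ∂(conv (a i : Measure G) (m i : Measure S))) F
      (𝓝 (∫ s, f s ∂(conv (a' : Measure G) (m' : Measure S)))) := by
  have h := (ProbabilityMeasure.continuous_prod (α := G) (β := S)).continuousAt.tendsto.comp
    (ha.prodMk_nhds hm)
  rw [ProbabilityMeasure.tendsto_iff_forall_integral_tendsto] at h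
  have h' := h (BoundedContinuousFunction.mkOfCompact ⟨fun p : G × S => f (p.1 • p.2),
    hf.comp continuous_smul⟩)
  simp only [aux_integral_conv' _ _ f hf]
  exact h'

lemma aux_ext {X : Type*} [TopologicalSpace X] [CompactSpace X]
    [TopologicalSpace.MetrizableSpace X] [MeasurableSpace X]
    [BorelSpace X] (m m' : Measure X) [IsFiniteMeasure m] [IsFiniteMeasure m']
    (h : ∀ f : X → ℝ, Continuous f → ∫ x, f x ∂m = ∫ x, f x ∂m') : m = m' := by
  letI := TopologicalSpace.metrizableSpaceMetric X
  exact ext_of_forall_integral_eq_of_IsFiniteMeasure fun f => h f f.continuous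

lemma aux_conv_add (a : Measure G) (m m' : Measure S) [IsFiniteMeasure a] [IsFiniteMeasure m]
    [IsFiniteMeasure m'] : conv a (m + m') = conv a m + conv a m' := by
  unfold conv
  rw [Measure.prod_add, Measure.map_add _ _ continuous_smul.measurable]

lemma aux_conv_smul (a : Measure G) (m : Measure S) [IsFiniteMeasure a] [IsFiniteMeasure m]
    (c : ℝ≥0∞) : conv a (c • m) = c • conv a m := by
  unfold conv
  rw [Measure.prod_smul_right, Measure.map_smul]

/-- If the convolutions `μ_k * μ_{k-1} * ⋯ * μ_{l+1}` converge weakly as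
`l → -∞` to probability measures `ν_k`, then every extreme point `(λ_k)` of the convex set
of solutions of the convolution equation `λ_k = μ_k * λ_{k-1}` is of the form
`λ_k = ν_k * δ_x` for some `x ∈ S`. -/
theorem tsirelson_extreme_convolution_solution_repr
    (μ : ℕ → Measure G) (hμ : ∀ k, IsProbabilityMeasure (μ k))
    (ν : ℕ → Measure G) (hν : ∀ k, IsProbabilityMeasure (ν k))
    (hweak : ∀ (n : ℕ) (f : C(G, ℝ)),
      Tendsto (fun j => ∫ σ, f σ ∂(convIter μ n j)) atTop (𝓝 (∫ σ, f σ ∂(ν n))))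
    (lam : ℕ → Measure S) (hlam : ∀ k, IsProbabilityMeasure (lam k))
    (hcvl : ∀ k, lam k = conv (μ k) (lam (k + 1)))
    (hext : ∀ (c : ℝ≥0) (lam₁ lam₂ : ℕ → Measure S), 0 < c → c < 1 →
      (∀ k, IsProbabilityMeasure (lam₁ k)) → (∀ k, lam₁ k = conv (μ k) (lam₁ (k + 1))) →
      (∀ k, IsProbabilityMeasure (lam₂ k)) → (∀ k, lam₂ k = conv (μ k) (lam₂ (k + 1))) →
      (∀ k, lam k = c • lam₁ k + (1 - c) • lam₂ k) →
      lam₁ = lam ∧ lam₂ = lam) :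
    ∃ x : S, ∀ k, lam k = conv (ν k) (Measure.dirac x) := by
  have hI := aux_convIter_prob μ hμ
  have hwk : ∀ n, Tendsto (fun j => (auxPM (convIter μ n j) (hI n j))) atTop
      (𝓝 (auxPM (ν n) (hν n))) := fun n => by
    rw [ProbabilityMeasure.tendsto_iff_forall_integral_tendsto]
    exact fun f => hweak n f.toContinuousMap
  -- ν satisfies the convolution equation
  have hνeq : ∀ n, ν n = convG (μ n) (ν (n + 1)) := fun n => by
    have := hμ n
    have := hν n
    have := hν (n + 1)
    have := aux_convG_prob (μ n) (ν (n + 1))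
    refine aux_ext _ _ fun f hf => ?_
    have h1 := (hweak n ⟨f, hf⟩).comp (tendsto_add_atTop_nat 1)
    have h2 := aux_tendsto (S := G) (fun _ : ℕ => (auxPM (μ n) (hμ n))) _ _ _
      tendsto_const_nhds (hwk (n + 1)) f hf
    refine tendsto_nhds_unique h1 (h2.congr fun j => ?_)
    change _ = ∫ σ, f σ ∂(convIter μ n (j + 1))
    rw [aux_convIter_succ μ hμ]
    rfl
  -- the limit law
  obtain ⟨m, hm⟩ : ∃ m : ProbabilityMeasure S,
      Tendsto (fun l => (auxPM (lam l) (hlam l))) (hyperfilter ℕ) (𝓝 m) := by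
    obtain ⟨m, -, hm⟩ := isCompact_univ.ultrafilter_le_nhds
      ((hyperfilter ℕ).map (fun l => (auxPM (lam l) (hlam l)))) (by simp)
    exact ⟨m, hm⟩
  have hle : (hyperfilter ℕ : Filter ℕ) ≤ atTop := Nat.hyperfilter_le_atTop
  have hrep : ∀ n, lam n = conv (ν n) (m : Measure S) := fun n => by
    have := hlam n
    have := hν n
    have := aux_conv_prob (ν n) (m : Measure S)
    refine aux_ext _ _ fun f hf => ?_
    have h1 : Tendsto (fun l => (auxPM (convIter μ n (l - (n + 1))) (hI n _)))
        (hyperfilter ℕ) (𝓝 (auxPM (ν n) (hν n))) :=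
      ((hwk n).comp (tendsto_sub_atTop_nat (n + 1))).mono_left hle
    have h2 := aux_tendsto _ _ _ _ h1 hm f hf
    refine tendsto_nhds_unique (tendsto_const_nhds.congr' ?_) h2
    filter_upwards [hle (eventually_ge_atTop (n + 1))] with l hl
    have e := aux_lam_iter μ hμ lam hlam hcvl n (l - (n + 1))
    have e' : n + (l - (n + 1)) + 1 = l := by omega
    rw [e'] at e
    change _ = ∫ s, f s ∂(conv (convIter μ n (l - (n + 1))) (lam l))
    rw [← e]
  have hsol : ∀ (p : Measure S) [IsProbabilityMeasure p] (k : ℕ),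
      conv (ν k) p = conv (μ k) (conv (ν (k + 1)) p) := fun p _ k => by
    have := hμ k
    have := hν (k + 1)
    rw [← aux_conv_assoc, ← hνeq]
  have hprob : ∀ (p : Measure S) [IsProbabilityMeasure p] (k : ℕ),
      IsProbabilityMeasure (conv (ν k) p) := fun p _ k => by
    have := hν k
    exact aux_conv_prob _ _
  -- extremality
  have hA : ∀ (A : Set S), MeasurableSet A → ∀ k,
      conv (ν k) ((m : Measure S).restrict A) = (m : Measure S) A • lam k := by
    intro A hAm k
    have := hν k
    by_cases h0 : (m : Measure S) A = 0
    · rw [h0, Measure.restrict_eq_zero.2 h0]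
      simp [conv]
    by_cases h1 : (m : Measure S) A = 1
    · have : (m : Measure S).restrict A = m :=
        Measure.restrict_eq_self_of_ae_mem ((prob_compl_eq_zero_iff hAm).2 h1)
      rw [h1, this, one_smul, hrep]
    have hc0 : (m : Measure S) Aᶜ ≠ 0 := fun h => h1 ((prob_compl_eq_zero_iff hAm).1 h)
    have := cond_isProbabilityMeasure h0
    have := cond_isProbabilityMeasure hc0
    have key : ∀ B : Set S, (m : Measure S) B ≠ 0 →
        (m : Measure S) B • ProbabilityTheory.cond (m : Measure S) B
          = (m : Measure S).restrict B := fun B hB => by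
      rw [ProbabilityTheory.cond, smul_smul, ENNReal.mul_inv_cancel hB (measure_ne_top _ _),
        one_smul]
    have key2 : ∀ B : Set S, (m : Measure S) B ≠ 0 → ∀ k,
        conv (ν k) ((m : Measure S).restrict B)
          = (m : Measure S) B • conv (ν k) (ProbabilityTheory.cond (m : Measure S) B) :=
      fun B hB k => by
        have := hν k
        rw [← key B hB, aux_conv_smul]
    have hcA : ((m A : ℝ≥0) : ℝ≥0∞) = (m : Measure S) A := by simp
    have hcAc : ((1 - m A : ℝ≥0) : ℝ≥0∞) = (m : Measure S) Aᶜ := by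
      rw [prob_compl_eq_one_sub hAm, ENNReal.coe_sub, hcA, ENNReal.coe_one]
    have hlt : m A < 1 := by
      rw [← ENNReal.coe_lt_coe, hcA]
      exact lt_of_le_of_ne prob_le_one h1
    have hpos : 0 < m A := by
      rw [← ENNReal.coe_lt_coe, hcA]
      exact pos_iff_ne_zero.2 h0
    have := (hext (m A) (fun k => conv (ν k) (ProbabilityTheory.cond (m : Measure S) A))
      (fun k => conv (ν k) (ProbabilityTheory.cond (m : Measure S) Aᶜ)) hpos hlt
      (hprob _) (hsol _) (hprob _) (hsol _) (fun k => by
        have := hν k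
        rw [hrep k]
        conv_lhs => rw [← Measure.restrict_add_restrict_compl (μ := (m : Measure S)) hAm]
        rw [aux_conv_add, key2 A h0, key2 _ hc0, ← hcA, ← hcAc]
        rfl)).1
    rw [key2 A h0, ← congrFun this k]
  obtain ⟨x, hx⟩ := Measure.nonempty_support (μ := (m : Measure S)) (IsProbabilityMeasure.ne_zero _)
  refine ⟨x, fun k => ?_⟩
  have := hν k
  have := hlam k
  have := hprob (Measure.dirac x) k
  refine aux_ext _ _ fun f hf => ?_
  rw [aux_integral_conv _ _ f hf]
  have hg : Continuous (fun y : S => ∫ σ, f (σ • y) ∂(ν k)) := by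
    have := continuous_parametric_integral_of_continuous (μ := ν k) (s := Set.univ)
      (f := fun (y : S) (σ : G) => f (σ • y))
      (hf.comp (continuous_snd.smul continuous_fst)) isCompact_univ
    simpa using this
  rw [integral_dirac]
  have hae : (fun y : S => ∫ σ, f (σ • y) ∂(ν k)) =ᵐ[(m : Measure S)]
      fun _ => ∫ s, f s ∂(lam k) := by
    refine (aux_integrable _ hg _).ae_eq_of_forall_setIntegral_eq _ _ (integrable_const _) ?_
    intro A hAm _
    rw [← aux_integral_conv _ _ f hf, hA A hAm k, integral_smul_measure, setIntegral_const]
    rfl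
  have hcl : IsClosed {y : S | ∫ σ, f (σ • y) ∂(ν k) = ∫ s, f s ∂(lam k)} :=
    isClosed_eq hg continuous_const
  exact (Measure.support_subset_of_isClosed hcl hae hx).symm

end Tsirelson
end

section
/- Suppose condition (P1') holds: for every k ∈ -ℕ, the random variable N_{k,l} = N_k N_{k-1} ⋯ N_{l+1} converges almost surely in Σ as l → -∞ (for some, equivalently any, solution with noise law μ). Then every extremal solution of Tsirelson's equation with noise law μ is strong. -/
open MeasureTheory ProbabilityTheory Filter Topology
open scoped NNReal ENNReal

universe u v w w₂

section Tsirelson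

variable {S : Type u} {G : Type v}
  [TopologicalSpace S] [CompactSpace S] [TopologicalSpace.MetrizableSpace S]
  [SecondCountableTopology S] [MeasurableSpace S] [BorelSpace S]
  [TopologicalSpace G] [CompactSpace G] [TopologicalSpace.MetrizableSpace G]
  [SecondCountableTopology G] [MeasurableSpace G] [BorelSpace G]
  [Semigroup G] [ContinuousMul G]
  [SMul G S] [ContinuousSMul G S] [IsScalarTower G G S]

/-- Under condition (P1') — a.s. convergence of the products
`N_{k,l} = N_k N_{k-1} ⋯ N_{l+1}` as `l → -∞` — every extremal solution is strong.
(Here `prodN N n j → ` as `j → ∞` encodes `N_{k,l} → ` as `l → -∞` for `k = -n`.) -/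
theorem tsirelson_P1'_extremal_implies_strong
    {Ω : Type w} [MeasurableSpace Ω] (P : Measure Ω) [IsProbabilityMeasure P]
    (μ : ℕ → Measure G) (hμ : ∀ k, IsProbabilityMeasure (μ k))
    (X : ℕ → Ω → S) (N : ℕ → Ω → G) (hsol : IsSolution P μ X N)
    (hP1 : ∀ n : ℕ, ∀ᵐ ω ∂P, ∃ y : G, Tendsto (fun j => prodN N n j ω) atTop (𝓝 y))
    (hext : TailTrivial P fun k => past X k ⊔ past N k) :
    IsStrong P X N := by
  have hΩ : Nonempty Ω := nonempty_of_isProbabilityMeasure P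
  -- zero-one law for the events `X_l ∈ U` infinitely often
  have hmeasX : ∀ U : Set S, MeasurableSet U → ∀ k,
      MeasurableSet[past X k ⊔ past N k] {ω | ∃ᶠ l in atTop, X l ω ∈ U} := by
    intro U hU k
    have he : {ω | ∃ᶠ l in atTop, X l ω ∈ U} = ⋂ a : ℕ, ⋃ b : ℕ, X (a + b + k) ⁻¹' U := by
      ext ω
      simp only [Set.mem_ofPred_eq, frequently_atTop, Set.mem_iInter, Set.mem_iUnion,
        Set.mem_preimage]
      constructor
      · intro h a
        obtain ⟨b, hb, hbU⟩ := h (a + k)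
        refine ⟨b - (a + k), ?_⟩
        have : a + (b - (a + k)) + k = b := by omega
        rwa [this]
      · intro h a
        obtain ⟨b, hb⟩ := h a
        exact ⟨a + b + k, by omega, hb⟩
    rw [he]
    refine MeasurableSet.iInter fun a => MeasurableSet.iUnion fun b => ?_
    have hle : MeasurableSpace.comap (X (a + b + k)) inferInstance ≤ past X k ⊔ past N k :=
      le_trans (le_iSup₂_of_le (f := fun j (_ : j ≥ k) =>
        MeasurableSpace.comap (X j) inferInstance) (a + b + k) (by omega) le_rfl) le_sup_left
    exact hle _ ⟨U, hU, rfl⟩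
  have h01 : ∀ U : Set S, MeasurableSet U →
      P {ω | ∃ᶠ l in atTop, X l ω ∈ U} = 0 ∨ (∀ᵐ ω ∂P, ∃ᶠ l in atTop, X l ω ∈ U) := by
    intro U hU
    have hle : past X 0 ⊔ past N 0 ≤ (inferInstance : MeasurableSpace Ω) :=
      sup_le (iSup₂_le fun j _ => (hsol.measurable_X j).comap_le)
        (iSup₂_le fun j _ => (hsol.measurable_N j).comap_le)
    rcases hext _ (MeasurableSpace.measurableSet_iInf.2 (hmeasX U hU)) with h | h
    · exact Or.inl h
    · exact Or.inr ((mem_ae_iff_prob_eq_one (hle _ (hmeasX U hU 0))).2 h)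
  -- a deterministic cluster point
  obtain ⟨z, hz⟩ : ∃ z : S, ∀ U : Set S, IsOpen U → z ∈ U →
      ∀ᵐ ω ∂P, ∃ᶠ l in atTop, X l ω ∈ U := by
    by_contra hcon
    push Not at hcon
    choose U hUo hUz hU using hcon
    obtain ⟨t, ht⟩ := isCompact_univ.elim_finite_subcover U hUo
      (fun x _ => Set.mem_iUnion.2 ⟨x, hUz x⟩)
    have hnull : ∀ᵐ ω ∂P, ∀ x ∈ t, ¬ ∃ᶠ l in atTop, X l ω ∈ U x := by
      rw [Filter.eventually_all_finset]
      intro x _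
      rcases h01 (U x) (hUo x).measurableSet with h | h
      · exact measure_eq_zero_iff_ae_notMem.1 h
      · exact absurd h (hU x)
    obtain ⟨ω, hω⟩ := hnull.exists
    have h2 : ∀ᶠ l in atTop, ∀ x ∈ t, X l ω ∉ U x := by
      rw [Filter.eventually_all_finset]
      intro x hx
      exact not_frequently.1 (hω x hx)
    obtain ⟨l, hl⟩ := h2.exists
    have := ht (Set.mem_univ (X l ω))
    simp only [Set.mem_iUnion] at this
    obtain ⟨x, hx, hxl⟩ := this
    exact hl x hx hxl
  have hclust : ∀ᵐ ω ∂P, MapClusterPt z atTop (fun l => X l ω) := by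
    have hB := TopologicalSpace.isBasis_countableBasis S
    have : ∀ᵐ ω ∂P, ∀ U ∈ TopologicalSpace.countableBasis S, z ∈ U →
        ∃ᶠ l in atTop, X l ω ∈ U := by
      rw [ae_ball_iff (TopologicalSpace.countable_countableBasis S)]
      intro U hU
      by_cases hzU : z ∈ U
      · filter_upwards [hz U (hB.isOpen hU) hzU] with ω h _ using h
      · exact Eventually.of_forall fun ω h => absurd h hzU
    filter_upwards [this] with ω hω
    rw [mapClusterPt_iff_frequently]
    intro s hs
    obtain ⟨U, hU, hzU, hUs⟩ := hB.mem_nhds_iff.1 hs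
    exact (hω U hU hzU).mono fun l hl => hUs hl
  intro n
  -- iterated equation
  have hiter : ∀ᵐ ω ∂P, ∀ j, X n ω = prodN N n j ω • X (n + j + 1) ω := by
    have hall : ∀ᵐ ω ∂P, ∀ k, X k ω = N k ω • X (k + 1) ω := ae_all_iff.2 hsol.eqn
    filter_upwards [hall] with ω hω j
    induction j with
    | zero => exact hω n
    | succ j ih =>
      rw [ih, hω (n + j + 1)]
      exact (smul_assoc (prodN N n j ω) (N (n + j + 1) ω) (X (n + j + 1 + 1) ω)).symm
  -- a measurable version of the limit
  have hprod : ∀ j, Measurable[past N n] (prodN N n j) := by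
    have hN : ∀ i, Measurable[past N n] (N (n + i)) := fun i =>
      measurable_iff_comap_le.2 (le_iSup₂_of_le (f := fun j (_ : j ≥ n) =>
        MeasurableSpace.comap (N j) inferInstance) (n + i) (by omega) le_rfl)
    intro j
    induction j with
    | zero => exact hN 0
    | succ j ih => exact Measurable.mul (m := past N n) ih (hN (j + 1))
  obtain ⟨g⟩ : Nonempty G := hΩ.map (N n)
  let _ := TopologicalSpace.metrizableSpaceMetric G
  classical
  let C : Set Ω := {ω | ∃ y : G, Tendsto (fun j => prodN N n j ω) atTop (𝓝 y)}
  have hC : MeasurableSet[past N n] C :=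
    @MeasureTheory.measurableSet_exists_tendsto ℕ G Ω (past N n) _ _ _ _ _ _ _ _ _ hprod
  have hlim : ∀ ω, ∃ y : G,
      Tendsto (fun j => if ω ∈ C then prodN N n j ω else g) atTop (𝓝 y) := by
    intro ω
    by_cases h : ω ∈ C
    · simp only [if_pos h]; exact h
    · exact ⟨g, by simp only [if_neg h]; exact tendsto_const_nhds⟩
  choose L hL using hlim
  have hLm : Measurable[past N n] L := by
    refine @measurable_of_tendsto_metrizable Ω G (past N n) _ _ _ _
      (fun j ω => if ω ∈ C then prodN N n j ω else g) L (fun j => ?_) (tendsto_pi_nhds.2 hL)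
    exact Measurable.ite (m := past N n) hC (hprod j) measurable_const
  refine ⟨fun ω => L ω • z, (continuous_id.smul continuous_const).measurable.comp hLm, ?_⟩
  filter_upwards [hclust, hiter, hP1 n] with ω h1 h2 h3
  have h4 : Tendsto (fun j => prodN N n j ω) atTop (𝓝 (L ω)) := by
    have := hL ω
    have hm : ω ∈ C := h3
    simpa only [if_pos hm] using this
  by_contra hne
  have hopen : (fun p : G × S => p.1 • p.2) ⁻¹' {X n ω}ᶜ ∈ 𝓝 (L ω, z) :=
    continuous_smul.continuousAt.preimage_mem_nhds
      (isOpen_compl_singleton.mem_nhds (fun h => hne h.symm))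
  rw [nhds_prod_eq] at hopen
  obtain ⟨A, hA, B, hB, hAB⟩ := mem_prod_iff.1 hopen
  obtain ⟨m, hm⟩ := eventually_atTop.1 (h4.eventually_mem hA)
  obtain ⟨l, hl, hlB⟩ := frequently_atTop.1 ((mapClusterPt_iff_frequently.1 h1) B hB) (n + m + 1)
  have hl' : n + (l - n - 1) + 1 = l := by omega
  have h5 := h2 (l - n - 1)
  rw [hl'] at h5
  exact hAB (Set.mk_mem_prod (hm (l - n - 1) (by omega)) hlB) h5.symm

end Tsirelson
end
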